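/- arXiv:1609.00533 — 5 statements merged into one kernel-verified Lean document; each statement's English description precedes it below -/
import Mathlib

section
/- Let X be a binomial random variable with parameters n and p, where n ≥ 1 and 0 < p < 1, and let q = 1 − p. Then for every real a with 0 ≤ a ≤ np, one has P(X ≤ E X − a) ≤ exp( − a² / ( 2( n p q − a(q−p)/3 ) ) ). -/
/-!
By the Chernoff–Hoeffding bound, `P(X ≤ n r) ≤ exp (-n D(r ‖ p))` for `r ≤ p`, where `D` is the
binary relative entropy: up to the factor `exp (-n D(r ‖ p))`, the distribution `Bi(n, r)` dominates
`Bi(n, p)` at and below `n r`. It remains to bound `D` from below. In the variable `t` its second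
derivative is `1 / (t (1 - t))`, and `t (1 - t)` lies below its tangent line at `p`, namely
`p (1 - p) + (1 - 2 p) (t - p)`. The weight `r - t` in the integral remainder of Taylor's formula at
`p` has its mean one third of the way from `p` to `r`, so Jensen's inequality for `u ↦ 1 / u` gives
`D(r ‖ p) ≥ (r - p)² / (2 (p (1 - p) + (1 - 2 p) (r - p) / 3))`; take `r = p - a / n`.
-/

open Real Set

section Taylor

variable {s : Set ℝ} {f f' f'' : ℝ → ℝ} {b c v x₀ x : ℝ}

lemma hasDerivAt_cubic (m b c x₀ t : ℝ) :
    HasDerivAt (fun t ↦ m * (t - x₀) + b * (t - x₀) ^ 2 / 2 + c * (t - x₀) ^ 3 / 6)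
      (m + b * (t - x₀) + c * (t - x₀) ^ 2 / 2) t := by
  have hid : HasDerivAt (fun t ↦ t - x₀) 1 t := (hasDerivAt_id' t).sub_const x₀
  refine (((hid.const_mul m).fun_add (((hid.fun_pow 2).const_mul b).div_const 2)).fun_add
    (((hid.fun_pow 3).const_mul c).div_const 6)).congr_deriv ?_
  push_cast
  ring

lemma hasDerivAt_quadratic (m b c x₀ t : ℝ) :
    HasDerivAt (fun t ↦ m + b * (t - x₀) + c * (t - x₀) ^ 2 / 2) (b + c * (t - x₀)) t := by
  have hid : HasDerivAt (fun t ↦ t - x₀) 1 t := (hasDerivAt_id' t).sub_const x₀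
  refine (((hid.const_mul b).const_add m).fun_add
    (((hid.fun_pow 2).const_mul c).div_const 2)).congr_deriv ?_
  push_cast
  ring

lemma isMinOn_of_convexOn_of_hasDerivAt_zero (hf : ConvexOn ℝ s f) (hx₀ : x₀ ∈ interior s)
    (hf' : HasDerivAt f 0 x₀) : IsMinOn f s x₀ :=
  hf.isMinOn_of_rightDeriv_eq_zero hx₀
    (hf'.hasDerivWithinAt.derivWithin (uniqueDiffWithinAt_Ioi x₀))

theorem taylor_cubic_le_of_affine_le_deriv2 (hs : Convex ℝ s) (hf : ContinuousOn f s)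
    (hf' : ∀ t ∈ interior s, HasDerivAt f (f' t) t)
    (hf'' : ∀ t ∈ interior s, HasDerivAt f' (f'' t) t)
    (hle : ∀ t ∈ interior s, b + c * (t - x₀) ≤ f'' t) (hx₀ : x₀ ∈ interior s) (hx : x ∈ s) :
    f x₀ + (f' x₀ * (x - x₀) + b * (x - x₀) ^ 2 / 2 + c * (x - x₀) ^ 3 / 6) ≤ f x := by
  let P (t : ℝ) : ℝ := f' x₀ * (t - x₀) + b * (t - x₀) ^ 2 / 2 + c * (t - x₀) ^ 3 / 6
  have hg' (t) (ht : t ∈ interior s) := (hf' t ht).fun_sub (hasDerivAt_cubic (f' x₀) b c x₀ t)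
  have hg'' (t) (ht : t ∈ interior s) := (hf'' t ht).fun_sub (hasDerivAt_quadratic (f' x₀) b c x₀ t)
  have hconvex : ConvexOn ℝ s (fun t ↦ f t - P t) :=
    convexOn_of_hasDerivWithinAt2_nonneg hs (hf.sub (by fun_prop))
      (fun t ht ↦ (hg' t ht).hasDerivWithinAt) (fun t ht ↦ (hg'' t ht).hasDerivWithinAt)
      (fun t ht ↦ sub_nonneg.2 (hle t ht))
  have hmin : IsMinOn (fun t ↦ f t - P t) s x₀ :=
    isMinOn_of_convexOn_of_hasDerivAt_zero hconvex hx₀ ((hg' x₀ hx₀).congr_deriv (by ring))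
  have hPx₀ : P x₀ = 0 := by simp [P]
  have hle_sub : f x₀ - P x₀ ≤ f x - P x := hmin hx
  change f x₀ + P x ≤ f x
  linarith

lemma two_mul_sub_div_sq_le_inv {u m : ℝ} (hu : 0 < u) (hm : 0 < m) :
    (2 * m - u) / m ^ 2 ≤ u⁻¹ := by
  rw [div_le_iff₀ (by positivity), inv_mul_eq_div, le_div_iff₀ hu]
  linarith [sq_nonneg (m - u)]

theorem taylor_add_sq_div_le_of_inv_affine_le_deriv2 (hs : Convex ℝ s) (hf : ContinuousOn f s)
    (hf' : ∀ t ∈ interior s, HasDerivAt f (f' t) t)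
    (hf'' : ∀ t ∈ interior s, HasDerivAt f' (f'' t) t)
    (hpos : ∀ t ∈ interior s, 0 < v + c * (t - x₀))
    (hle : ∀ t ∈ interior s, (v + c * (t - x₀))⁻¹ ≤ f'' t) (hx₀ : x₀ ∈ interior s) (hx : x ∈ s) :
    f x₀ + f' x₀ * (x - x₀) + (x - x₀) ^ 2 / (2 * (v + c * (x - x₀) / 3)) ≤ f x := by
  set m := v + c * (x - x₀) / 3 with hm
  have hm_pos : 0 < m := by
    have hmem : x + (2 / 3 : ℝ) • (x₀ - x) ∈ interior s :=
      hs.add_smul_sub_mem_interior hx hx₀ (by norm_num)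
    convert hpos _ hmem using 1
    rw [smul_eq_mul, hm]
    ring
  have htangent (t) (ht : t ∈ interior s) :
      (2 * m - v) / m ^ 2 + -c / m ^ 2 * (t - x₀) ≤ f'' t := calc
    _ = (2 * m - (v + c * (t - x₀))) / m ^ 2 := by ring
    _ ≤ (v + c * (t - x₀))⁻¹ := two_mul_sub_div_sq_le_inv (hpos t ht) hm_pos
    _ ≤ f'' t := hle t ht
  have hremainder : (x - x₀) ^ 2 / (2 * m) =
      (2 * m - v) / m ^ 2 * (x - x₀) ^ 2 / 2 + -c / m ^ 2 * (x - x₀) ^ 3 / 6 := by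
    have hv : v = m - c * (x - x₀) / 3 := by linarith
    rw [hv]
    field_simp
    ring
  have := taylor_cubic_le_of_affine_le_deriv2 hs hf hf' hf'' htangent hx₀ hx
  linarith

end Taylor

section BinaryRelativeEntropy

variable {p r t : ℝ}

/-- The relative entropy (Kullback–Leibler divergence) of the Bernoulli distribution with
parameter `r` with respect to the one with parameter `p`, which is the exponential rate of the
binomial tail. It is real-valued, so it is meaningful only for `0 < p < 1`; the convention
`0 * log 0 = 0` at `r = 0` and `r = 1` comes from `Real.log 0 = 0`. -/
noncomputable def binKLDiv (r p : ℝ) : ℝ :=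
  r * log (r / p) + (1 - r) * log ((1 - r) / (1 - p))

lemma mul_log_div (hp : p ≠ 0) : r * log (r / p) = r * log r - r * log p := by
  rcases eq_or_ne r 0 with rfl | hr
  · simp
  · rw [log_div hr hp, mul_sub]

lemma binKLDiv_self (p : ℝ) : binKLDiv p p = 0 := by
  simp [binKLDiv]

lemma binKLDiv_eq_sub_binEntropy (hp₀ : p ≠ 0) (hp₁ : p ≠ 1) :
    binKLDiv r p = -(r * log p + (1 - r) * log (1 - p)) - binEntropy r := by
  rw [binKLDiv, mul_log_div hp₀, mul_log_div (sub_ne_zero.2 hp₁.symm), binEntropy, log_inv, log_inv]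
  ring

lemma continuous_binKLDiv_left (hp₀ : p ≠ 0) (hp₁ : p ≠ 1) : Continuous (binKLDiv · p) := by
  simp only [binKLDiv_eq_sub_binEntropy hp₀ hp₁]
  fun_prop

lemma hasDerivAt_binKLDiv_left (hp₀ : p ≠ 0) (hp₁ : p ≠ 1) (ht₀ : t ≠ 0) (ht₁ : t ≠ 1) :
    HasDerivAt (binKLDiv · p) (log t - log (1 - t) - (log p - log (1 - p))) t := by
  simp only [binKLDiv_eq_sub_binEntropy hp₀ hp₁]
  have hcross := (((hasDerivAt_id' t).mul_const (log p)).fun_add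
    (((hasDerivAt_id' t).const_sub 1).mul_const (log (1 - p)))).fun_neg
  exact (hcross.fun_sub (hasDerivAt_binEntropy ht₀ ht₁)).congr_deriv (by ring)

lemma hasDerivAt_log_sub_log_one_sub (ht₀ : t ≠ 0) (ht₁ : t ≠ 1) :
    HasDerivAt (fun t ↦ log t - log (1 - t)) (t * (1 - t))⁻¹ t := by
  have hsub : 1 - t ≠ 0 := sub_ne_zero.2 ht₁.symm
  refine ((hasDerivAt_log ht₀).fun_sub
    (((hasDerivAt_id' t).const_sub 1).log hsub)).congr_deriv ?_
  field_simp
  ring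

theorem sq_div_le_binKLDiv (hp : p ∈ Ioo 0 1) (hr : r ∈ Icc 0 1) :
    (r - p) ^ 2 / (2 * (p * (1 - p) + (1 - 2 * p) * (r - p) / 3)) ≤ binKLDiv r p := by
  have hvar_pos (t : ℝ) (ht : t ∈ Ioo 0 1) : 0 < t * (1 - t) := mul_pos ht.1 (sub_pos.2 ht.2)
  have hvar_le (t : ℝ) : t * (1 - t) ≤ p * (1 - p) + (1 - 2 * p) * (t - p) := by
    linarith [sq_nonneg (t - p)]
  have htaylor := taylor_add_sq_div_le_of_inv_affine_le_deriv2 (convex_Icc 0 1)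
    (continuous_binKLDiv_left hp.1.ne' hp.2.ne).continuousOn
    (f' := fun t ↦ log t - log (1 - t) - (log p - log (1 - p))) (f'' := fun t ↦ (t * (1 - t))⁻¹)
    (v := p * (1 - p)) (c := 1 - 2 * p) (x₀ := p) (x := r)
  rw [interior_Icc] at htaylor
  simpa only [binKLDiv_self, sub_self, zero_mul, zero_add] using htaylor
    (fun t ht ↦ hasDerivAt_binKLDiv_left hp.1.ne' hp.2.ne ht.1.ne' ht.2.ne)
    (fun t ht ↦ (hasDerivAt_log_sub_log_one_sub ht.1.ne' ht.2.ne).sub_const _)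
    (fun t ht ↦ (hvar_pos t ht).trans_le (hvar_le t))
    (fun t ht ↦ inv_anti₀ (hvar_pos t ht) (hvar_le t)) hp hr

end BinaryRelativeEntropy

section Chernoff

variable {n k : ℕ} {p r : ℝ}

lemma mul_binKLDiv_le_log_likelihood_ratio (hr : 0 ≤ r) (hrp : r ≤ p) (hp : p < 1)
    (hk : k ≤ n * r) :
    n * binKLDiv r p ≤ k * log (r / p) + (n - k) * log ((1 - r) / (1 - p)) := by
  have hlog_r : log (r / p) ≤ 0 :=
    log_nonpos (div_nonneg hr (hr.trans hrp)) (div_le_one_of_le₀ hrp (hr.trans hrp))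
  have hlog_one_sub : 0 ≤ log ((1 - r) / (1 - p)) :=
    log_nonneg ((one_le_div (sub_pos.2 hp)).2 (sub_le_sub_left hrp 1))
  have := mul_nonneg (sub_nonneg.2 hk) (sub_nonneg.2 (hlog_r.trans hlog_one_sub))
  rw [binKLDiv]
  linarith

lemma exp_mul_binKLDiv_le_likelihood_ratio (hr : 0 ≤ r) (hrp : r ≤ p) (hp₀ : 0 < p) (hp₁ : p < 1)
    (hkn : k ≤ n) (hk : k ≤ n * r) :
    exp (n * binKLDiv r p) ≤ (r / p) ^ k * ((1 - r) / (1 - p)) ^ (n - k) := by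
  have hone_sub : 0 < (1 - r) / (1 - p) := div_pos (by linarith) (by linarith)
  have hpow : exp (k * log (r / p)) = (r / p) ^ k := by
    rcases hr.eq_or_lt with rfl | hr
    · obtain rfl : k = 0 := by simpa using hk
      simp
    · rw [exp_nat_mul, exp_log (div_pos hr hp₀)]
  calc exp (n * binKLDiv r p)
      ≤ exp (k * log (r / p) + (n - k) * log ((1 - r) / (1 - p))) :=
        exp_le_exp.2 (mul_binKLDiv_le_log_likelihood_ratio hr hrp hp₁ hk)
    _ = (r / p) ^ k * ((1 - r) / (1 - p)) ^ (n - k) := by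
        rw [exp_add, hpow, ← Nat.cast_sub hkn, exp_nat_mul, exp_log hone_sub]

lemma pow_mul_pow_le_exp_neg_mul_binKLDiv_mul (hr : 0 ≤ r) (hrp : r ≤ p) (hp₀ : 0 < p)
    (hp₁ : p < 1) (hkn : k ≤ n) (hk : k ≤ n * r) :
    p ^ k * (1 - p) ^ (n - k) ≤ exp (-(n * binKLDiv r p)) * (r ^ k * (1 - r) ^ (n - k)) := by
  have hden : 0 < p ^ k * (1 - p) ^ (n - k) :=
    mul_pos (pow_pos hp₀ k) (pow_pos (sub_pos.2 hp₁) (n - k))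
  have h := exp_mul_binKLDiv_le_likelihood_ratio hr hrp hp₀ hp₁ hkn hk
  rw [div_pow, div_pow, div_mul_div_comm, le_div_iff₀ hden] at h
  rwa [exp_neg, inv_mul_eq_div, le_div_iff₀' (exp_pos _)]

theorem binomial_lower_tail_chernoff (n : ℕ) (hr : 0 ≤ r) (hrp : r ≤ p) (hp₀ : 0 < p)
    (hp₁ : p < 1) :
    ∑ k ∈ Finset.range (n + 1) with ((k : ℕ) : ℝ) ≤ n * r, n.choose k * p ^ k * (1 - p) ^ (n - k)
      ≤ exp (-(n * binKLDiv r p)) := by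
  have hr₁ : 0 ≤ 1 - r := by linarith
  calc ∑ k ∈ Finset.range (n + 1) with ((k : ℕ) : ℝ) ≤ n * r, n.choose k * p ^ k * (1 - p) ^ (n - k)
      ≤ ∑ k ∈ Finset.range (n + 1) with ((k : ℕ) : ℝ) ≤ n * r,
          exp (-(n * binKLDiv r p)) * (r ^ k * (1 - r) ^ (n - k) * n.choose k) := by
        refine Finset.sum_le_sum fun k hk ↦ ?_
        obtain ⟨hkn, hkr⟩ := Finset.mem_filter.1 hk
        have h := pow_mul_pow_le_exp_neg_mul_binKLDiv_mul hr hrp hp₀ hp₁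
          (Finset.mem_range_succ_iff.1 hkn) hkr
        linear_combination (n.choose k : ℝ) * h
    _ ≤ ∑ k ∈ Finset.range (n + 1),
          exp (-(n * binKLDiv r p)) * (r ^ k * (1 - r) ^ (n - k) * n.choose k) :=
        Finset.sum_le_sum_of_subset_of_nonneg (Finset.filter_subset _ _)
          fun k _ _ ↦ by positivity
    _ = exp (-(n * binKLDiv r p)) := by
        rw [← Finset.mul_sum, ← add_pow, add_sub_cancel, one_pow, mul_one]

end Chernoff

/-- For `X ~ Bi(n,p)`, `q = 1 - p` and `0 ≤ a ≤ np`: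
`P(X ≤ EX - a) ≤ exp(-a² / (2(npq - a(q-p)/3)))`. -/
theorem binomial_lower_tail_bernstein (n : ℕ) (hn : 1 ≤ n) (p : ℝ)
    (hp0 : 0 < p) (hp1 : p < 1) (a : ℝ) (ha0 : 0 ≤ a) (ha1 : a ≤ (n : ℝ) * p) :
    (∑ k ∈ Finset.range (n + 1),
        if (k : ℝ) ≤ (n : ℝ) * p - a then
          (n.choose k : ℝ) * p ^ k * (1 - p) ^ (n - k) else 0)
      ≤ Real.exp (-(a ^ 2 / (2 * ((n : ℝ) * p * (1 - p) - a * ((1 - p) - p) / 3)))) := by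
  have hn₀ : (0 : ℝ) < n := by exact_mod_cast hn
  obtain ⟨r, rfl⟩ : ∃ r, a = n * (p - r) := ⟨p - a / n, by field_simp; ring⟩
  have hrp : r ≤ p := sub_nonneg.1 (nonneg_of_mul_nonneg_right ha0 hn₀)
  have hr : 0 ≤ r := by linarith [le_of_mul_le_mul_left ha1 hn₀]
  have hexponent : (n * (p - r)) ^ 2 /
      (2 * ((n : ℝ) * p * (1 - p) - n * (p - r) * ((1 - p) - p) / 3)) =
        n * ((r - p) ^ 2 / (2 * (p * (1 - p) + (1 - 2 * p) * (r - p) / 3))) := by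
    rw [← mul_div_assoc, ← mul_div_mul_left (n * (r - p) ^ 2) _ hn₀.ne']
    congr 1 <;> ring
  have hevent : (n : ℝ) * p - n * (p - r) = n * r := by ring
  rw [← Finset.sum_filter, hevent, hexponent]
  refine (binomial_lower_tail_chernoff n hr hrp hp0 hp1).trans ?_
  gcongr
  exact sq_div_le_binKLDiv ⟨hp0, hp1⟩ ⟨hr, by linarith⟩
end

section
/- Let X be a binomial random variable with parameters n and p, where n ≥ 1 and 0 < p ≤ 1/2, and let q = 1 − p. Then for every real a ≥ 0, one has P(X ≤ E X − a) ≤ exp( − a² / (2npq) ). -/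
/-!
Chernoff's method bounds the lower tail by `exp (t * (np - a)) * (p * exp (-t) + q) ^ n` for any
`t ≥ 0`. The second derivative of `log (p * exp (-t) + q)` is `u * (1 - u)`, the variance of the
exponentially tilted Bernoulli law of parameter `u = p * exp (-t) / (p * exp (-t) + q)`. Tilting by
`t ≥ 0` decreases the parameter, and the Bernoulli variance increases with the parameter on
`[0, 1/2]`; so for `p ≤ 1/2` the second derivative is at most `p * q`, and Taylor's formula bounds
the moment generating function by the Gaussian one. The choice `t = a / (npq)` is optimal.
-/

open Real Set

lemma le_quadratic_of_second_deriv_le {f f' f'' : ℝ → ℝ} {a b c : ℝ} (hab : a ≤ b)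
    (hf : ∀ x ∈ Icc a b, HasDerivWithinAt f (f' x) (Icc a b) x)
    (hf' : ∀ x ∈ Icc a b, HasDerivWithinAt f' (f'' x) (Icc a b) x)
    (hc : ∀ x ∈ Ico a b, f'' x ≤ c) :
    f b ≤ f a + f' a * (b - a) + c * (b - a) ^ 2 / 2 := by
  have hright {g : ℝ → ℝ} {g' x : ℝ} (hx : x ∈ Ico a b)
      (hg : HasDerivWithinAt g g' (Icc a b) x) : HasDerivWithinAt g g' (Ici x) x :=
    hg.mono_of_mem_nhdsWithin (Icc_mem_nhdsGE_of_mem hx)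
  have hlinear (x : ℝ) : HasDerivAt (fun y ↦ f' a + c * (y - a)) c x := by
    simpa only [mul_one] using (((hasDerivAt_id' x).sub_const a).const_mul c).const_add (f' a)
  have hquadratic (x : ℝ) :
      HasDerivAt (fun y ↦ f a + f' a * (y - a) + c * (y - a) ^ 2 / 2) (f' a + c * (x - a)) x := by
    have hid := (hasDerivAt_id' x).sub_const a
    refine (((hid.const_mul (f' a)).const_add (f a)).add
      (((hid.pow 2).const_mul c).div_const 2)).congr_deriv ?_
    ring
  have hf'_le : ∀ x ∈ Icc a b, f' x ≤ f' a + c * (x - a) :=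
    image_le_of_deriv_right_le_deriv_boundary (fun x hx ↦ (hf' x hx).continuousWithinAt)
      (fun x hx ↦ hright hx (hf' x (Ico_subset_Icc_self hx))) (by simp)
      (fun x _ ↦ (hlinear x).continuousAt.continuousWithinAt)
      (fun x _ ↦ (hlinear x).hasDerivWithinAt) hc
  exact image_le_of_deriv_right_le_deriv_boundary (fun x hx ↦ (hf x hx).continuousWithinAt)
    (fun x hx ↦ hright hx (hf x (Ico_subset_Icc_self hx))) (by simp)
    (fun x _ ↦ (hquadratic x).continuousAt.continuousWithinAt)
    (fun x _ ↦ (hquadratic x).hasDerivWithinAt)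
    (fun x hx ↦ hf'_le x (Ico_subset_Icc_self hx)) (right_mem_Icc.2 hab)

lemma mul_one_sub_le_mul_one_sub {x y : ℝ} (hxy : x ≤ y) (hadd : x + y ≤ 1) :
    x * (1 - x) ≤ y * (1 - y) := by
  have hfactor : 0 ≤ (y - x) * (1 - (x + y)) := mul_nonneg (sub_nonneg.2 hxy) (sub_nonneg.2 hadd)
  linarith

/-- The moment generating function, at `-t`, of the Bernoulli law with parameter `p`. The sign
is chosen so that lower tails correspond to `t ≥ 0`. -/
noncomputable def bernoulliMGFNeg (p t : ℝ) : ℝ :=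
  p * exp (-t) + (1 - p)

/-- The parameter of the Bernoulli law with parameter `p` after exponential tilting by `-t`, that
is, after reweighting by the density `x ↦ exp (-t * x)` and normalizing. -/
noncomputable def bernoulliTilt (p t : ℝ) : ℝ :=
  p * exp (-t) / bernoulliMGFNeg p t

section Bernoulli

variable {p t : ℝ}

lemma bernoulliMGFNeg_zero (p : ℝ) : bernoulliMGFNeg p 0 = 1 := by
  simp [bernoulliMGFNeg]

lemma bernoulliTilt_zero (p : ℝ) : bernoulliTilt p 0 = p := by
  simp [bernoulliTilt, bernoulliMGFNeg_zero]

lemma bernoulliMGFNeg_pos (hp0 : 0 ≤ p) (hp1 : p ≤ 1) (t : ℝ) : 0 < bernoulliMGFNeg p t := by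
  rcases hp1.eq_or_lt with rfl | hp1
  · simp [bernoulliMGFNeg, exp_pos]
  · exact add_pos_of_nonneg_of_pos (mul_nonneg hp0 (exp_pos _).le) (sub_pos.2 hp1)

lemma hasDerivAt_bernoulliMGFNeg (p t : ℝ) :
    HasDerivAt (bernoulliMGFNeg p) (-(p * exp (-t))) t := by
  refine (((hasDerivAt_neg' t).exp.const_mul p).add_const (1 - p)).congr_deriv ?_
  ring

lemma hasDerivAt_log_bernoulliMGFNeg (ht : bernoulliMGFNeg p t ≠ 0) :
    HasDerivAt (fun s ↦ log (bernoulliMGFNeg p s)) (-bernoulliTilt p t) t := by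
  simpa only [bernoulliTilt, neg_div] using (hasDerivAt_bernoulliMGFNeg p t).log ht

lemma hasDerivAt_bernoulliTilt (ht : bernoulliMGFNeg p t ≠ 0) :
    HasDerivAt (bernoulliTilt p) (-(bernoulliTilt p t * (1 - bernoulliTilt p t))) t := by
  refine (((hasDerivAt_neg' t).exp.const_mul p).div
    (hasDerivAt_bernoulliMGFNeg p t) ht).congr_deriv ?_
  rw [bernoulliTilt]
  field_simp
  ring

lemma bernoulliTilt_le_self (hp0 : 0 ≤ p) (hp1 : p ≤ 1) (ht : 0 ≤ t) :
    bernoulliTilt p t ≤ p := by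
  have hexp : exp (-t) ≤ bernoulliMGFNeg p t := by
    have hfailure : (1 - p) * exp (-t) ≤ 1 - p :=
      mul_le_of_le_one_right (sub_nonneg.2 hp1) (exp_le_one_iff.2 (neg_nonpos.2 ht))
    rw [bernoulliMGFNeg]
    linarith
  exact (div_le_iff₀ (bernoulliMGFNeg_pos hp0 hp1 t)).2 (mul_le_mul_of_nonneg_left hexp hp0)

lemma bernoulliMGFNeg_le_exp (hp0 : 0 ≤ p) (hp1 : p ≤ 1 / 2) (ht : 0 ≤ t) :
    bernoulliMGFNeg p t ≤ exp (-(p * t) + p * (1 - p) * t ^ 2 / 2) := by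
  have hp_le_one : p ≤ 1 := by linarith
  have hpos := bernoulliMGFNeg_pos hp0 hp_le_one
  have htilted_variance {s : ℝ} (hs : 0 ≤ s) :
      bernoulliTilt p s * (1 - bernoulliTilt p s) ≤ p * (1 - p) := by
    have hle := bernoulliTilt_le_self hp0 hp_le_one hs
    exact mul_one_sub_le_mul_one_sub hle (by linarith)
  rw [← log_le_iff_le_exp (hpos t)]
  have htaylor := le_quadratic_of_second_deriv_le ht
    (fun s _ ↦ (hasDerivAt_log_bernoulliMGFNeg (hpos s).ne').hasDerivWithinAt)
    (fun s _ ↦ (hasDerivAt_bernoulliTilt (hpos s).ne').neg.hasDerivWithinAt)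
    (fun s hs ↦ (neg_neg _).trans_le (htilted_variance hs.1))
  simpa only [Pi.neg_apply, bernoulliMGFNeg_zero, bernoulliTilt_zero, log_one, zero_add, sub_zero,
    neg_mul] using htaylor

end Bernoulli

lemma sum_ite_le_exp_mul_sum {ι : Type*} (s : Finset ι) {w : ι → ℝ} (hw : ∀ i ∈ s, 0 ≤ w i)
    (x : ι → ℝ) (c : ℝ) {t : ℝ} (ht : 0 ≤ t) :
    (∑ i ∈ s, if x i ≤ c then w i else 0) ≤ exp (t * c) * ∑ i ∈ s, w i * exp (-t * x i) := by
  rw [Finset.mul_sum]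
  refine Finset.sum_le_sum fun i hi ↦ ?_
  have hwi := hw i hi
  split_ifs with hx
  · have hone : 1 ≤ exp (t * c + -t * x i) :=
      one_le_exp (by linarith [mul_le_mul_of_nonneg_left hx ht])
    calc w i ≤ w i * exp (t * c + -t * x i) := le_mul_of_one_le_right hwi hone
      _ = exp (t * c) * (w i * exp (-t * x i)) := by rw [exp_add]; ring
  · positivity

lemma binomial_lower_tail_le_exp_mul_pow (n : ℕ) {p q : ℝ} (hp : 0 ≤ p) (hq : 0 ≤ q) (c : ℝ)
    {t : ℝ} (ht : 0 ≤ t) :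
    (∑ k ∈ Finset.range (n + 1),
        if (k : ℝ) ≤ c then (n.choose k : ℝ) * p ^ k * q ^ (n - k) else 0)
      ≤ exp (t * c) * (p * exp (-t) + q) ^ n := by
  refine (sum_ite_le_exp_mul_sum _ (fun k _ ↦ by positivity) _ c ht).trans_eq ?_
  rw [add_pow]
  congr 1
  refine Finset.sum_congr rfl fun k _ ↦ ?_
  rw [mul_comm (-t), exp_nat_mul, mul_pow]
  ring

lemma binomial_lower_tail_le_exp_quadratic (n : ℕ) {p : ℝ} (hp0 : 0 ≤ p) (hp1 : p ≤ 1 / 2) (a : ℝ)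
    {t : ℝ} (ht : 0 ≤ t) :
    (∑ k ∈ Finset.range (n + 1),
        if (k : ℝ) ≤ (n : ℝ) * p - a then
          (n.choose k : ℝ) * p ^ k * (1 - p) ^ (n - k) else 0)
      ≤ exp (-(t * a) + n * p * (1 - p) * t ^ 2 / 2) := by
  calc
    _ ≤ exp (t * (n * p - a)) * bernoulliMGFNeg p t ^ n :=
      binomial_lower_tail_le_exp_mul_pow n hp0 (by linarith) _ ht
    _ ≤ exp (t * (n * p - a)) * exp (-(p * t) + p * (1 - p) * t ^ 2 / 2) ^ n := by
      gcongr
      · exact (bernoulliMGFNeg_pos hp0 (by linarith) t).le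
      · exact bernoulliMGFNeg_le_exp hp0 hp1 ht
    _ = exp (-(t * a) + n * p * (1 - p) * t ^ 2 / 2) := by
      rw [← exp_nat_mul, ← exp_add]
      ring_nf

/-- For `X ~ Bi(n,p)` with `p ≤ 1/2`, `q = 1 - p`, and every `a ≥ 0`:
`P(X ≤ EX - a) ≤ exp(-a²/(2npq))`. -/
theorem binomial_lower_tail_variance (n : ℕ) (hn : 1 ≤ n) (p : ℝ)
    (hp0 : 0 < p) (hp1 : p ≤ 1 / 2) (a : ℝ) (ha0 : 0 ≤ a) :
    (∑ k ∈ Finset.range (n + 1),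
        if (k : ℝ) ≤ (n : ℝ) * p - a then
          (n.choose k : ℝ) * p ^ k * (1 - p) ^ (n - k) else 0)
      ≤ Real.exp (-(a ^ 2 / (2 * ((n : ℝ) * p * (1 - p))))) := by
  have hvar : 0 < (n : ℝ) * p * (1 - p) :=
    mul_pos (mul_pos (by exact_mod_cast hn) hp0) (by linarith)
  refine (binomial_lower_tail_le_exp_quadratic n hp0.le hp1 a
    (div_nonneg ha0 hvar.le)).trans_eq (congrArg Real.exp ?_)
  field_simp
  ring
end

section
/- For every α > 0, every c with 0 < c < 1/e, and every A < ∞, there exist a positive integer n and indicator random variables I_1, ..., I_n on some probability space which are negatively related, such that the random variable X = I_1 + ... + I_n satisfies σ² := Var X > A and P( X > E X + a ) > c·e^{−a/σ}, where a = α·σ and σ = √(Var X). -/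
open MeasureTheory ProbabilityTheory

/-- Indicator variables `(Iᵢ)` on a probability space `(Ω, μ)` are *negatively related*
if for each `j` with `P(I_j = 1) > 0` there is an extension `(Ω', μ', π)` of the
probability space carrying random variables `(J_{ij})ᵢ` whose joint distribution equals
the conditional joint distribution of `(Iᵢ)ᵢ` given `I_j = 1`, and such that
`J_{ij} ≤ Iᵢ` almost surely for every `i ≠ j`. -/
def NegativelyRelated {Ω : Type*} [MeasurableSpace Ω] (μ : Measure Ω)
    {n : ℕ} (I : Fin n → Ω → ℝ) : Prop :=
  ∀ j : Fin n, μ {ω | I j ω = 1} ≠ 0 →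
    ∃ (Ω' : Type) (_ : MeasurableSpace Ω') (μ' : Measure Ω')
      (_ : IsProbabilityMeasure μ') (π : Ω' → Ω) (J : Fin n → Ω' → ℝ),
      Measurable π ∧ Measure.map π μ' = μ ∧ (∀ i, Measurable (J i)) ∧
      Measure.map (fun ω' i => J i ω') μ' =
        Measure.map (fun ω i => I i ω) (μ[|{ω | I j ω = 1}]) ∧
      ∀ i, i ≠ j → ∀ᵐ ω' ∂μ', J i ω' ≤ I i (π ω')

/-!
The law with mass `q` at `K` and `1 - q` at `0` has variance `q (1 - q) K²` and exceeds its mean by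
`α` standard deviations with probability `q` as soon as `q < 1 / (1 + α²)`; this is the equality
case of Cantelli's inequality, and `c * exp (-α) < exp (-α) < 1 / (1 + α²)`. So it suffices that
every law charging all points of `{0, …, K}` is, up to a shift by `m`, the law of a sum of
negatively related indicators; the two-point law is perturbed slightly to have full support.

Take the membership indicators of a set `S ⊆ {1, …, n}` which is uniformly random given its size,
the size having the law shifted by `m`. Given `j ∈ S` the size follows the size-biased law, which
differs from the law of `S.card` by at most `K / m` in its tails. If `j ∈ S` keep `S`; otherwise
adjoin `j` and remove a uniformly random element of `S`, except that no element is removed on an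
event of probability `P(X* > k) - P(X > k)` inside `{S.card = k, j ∉ S}`, where `X = S.card` and
`X*` has the size-biased law. There is room for this event once `n ≥ 2 (m + K)` and `m` is large.
No indicator other than the `j`-th increases.
-/

lemma one_add_sq_lt_exp {x : ℝ} (hx : 0 < x) : 1 + x ^ 2 < Real.exp x := calc
  1 + x ^ 2 < ∑ i ∈ Finset.range 4, x ^ i / i.factorial := by
    norm_num [Finset.sum_range_succ, Nat.factorial]
    nlinarith [mul_pos hx (by positivity : 0 < (2 * x - 3) ^ 2 + 15)]
  _ ≤ Real.exp x := Real.sum_le_exp_of_nonneg hx.le 4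

lemma exists_pos_mem_stdSimplex_of_isOpen {ι : Type*} [Fintype ι] {U : Set (ι → ℝ)} (hU : IsOpen U)
    {w : ι → ℝ} (hw : w ∈ stdSimplex ℝ ι) (hwU : w ∈ U) :
    ∃ v ∈ stdSimplex ℝ ι, (∀ i, 0 < v i) ∧ v ∈ U := by
  have : Nonempty ι := by
    by_contra! h
    simp [stdSimplex] at hw
  let u : stdSimplex ℝ ι := stdSimplex.barycenter
  have hmem : ∀ᶠ t : ℝ in nhdsWithin 0 (Set.Ioi 0), AffineMap.lineMap w u.1 t ∈ U := by
    refine (AffineMap.lineMap_continuous.tendsto' 0 w ?_).mono_left nhdsWithin_le_nhds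
      |>.eventually (hU.mem_nhds hwU)
    exact AffineMap.lineMap_apply_zero w u.1
  obtain ⟨t, htU, ht0, ht1⟩ := (hmem.and (Ioo_mem_nhdsGT one_pos)).exists
  refine ⟨_, (convex_stdSimplex ℝ ι).lineMap_mem hw u.2 ⟨ht0.le, ht1.le⟩, fun i => ?_, htU⟩
  have hu : 0 < u.1 i := inv_pos.mpr (Nat.cast_pos.mpr Fintype.card_pos)
  rw [AffineMap.lineMap_apply_module]
  exact add_pos_of_nonneg_of_pos (mul_nonneg (sub_nonneg.mpr ht1.le) (hw.1 i)) (mul_pos ht0 hu)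

section FiniteSpace

variable {Ω : Type*} [Fintype Ω] [MeasurableSpace Ω]

lemma exists_isProbabilityMeasure_real_singleton_eq [MeasurableSingletonClass Ω] {w : Ω → ℝ}
    (hw : w ∈ stdSimplex ℝ Ω) :
    ∃ μ : Measure Ω, IsProbabilityMeasure μ ∧ ∀ a, μ.real {a} = w a := by
  have hsum : ∑ a, ENNReal.ofReal (w a) = 1 := by
    rw [← ENNReal.ofReal_sum_of_nonneg fun a _ => hw.1 a, hw.2, ENNReal.ofReal_one]
  refine ⟨(PMF.ofFintype _ hsum).toMeasure, inferInstance, fun a => ?_⟩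
  rw [measureReal_def, PMF.toMeasure_apply_singleton _ _ (measurableSet_singleton a),
    PMF.ofFintype_apply, ENNReal.toReal_ofReal (hw.1 a)]

lemma map_real_singleton [DiscreteMeasurableSpace Ω] {Ω' : Type*} [DecidableEq Ω']
    [MeasurableSpace Ω'] [MeasurableSingletonClass Ω'] (μ : Measure Ω) [IsFiniteMeasure μ]
    (f : Ω → Ω') (b : Ω') :
    (μ.map f).real {b} = ∑ a with f a = b, μ.real {a} := by
  rw [map_measureReal_apply .of_discrete (measurableSet_singleton b), sum_measureReal_singleton]
  congr 1
  ext a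
  simp

lemma variance_fintype [DiscreteMeasurableSpace Ω] (μ : Measure Ω) [IsFiniteMeasure μ] (X : Ω → ℝ) :
    Var[X; μ] = ∑ a, μ.real {a} * (X a - ∑ b, μ.real {b} * X b) ^ 2 := by
  rw [variance_eq_integral .of_discrete, integral_fintype .of_finite, integral_fintype .of_finite]
  simp only [smul_eq_mul]

end FiniteSpace

lemma cond_real_singleton {Ω : Type*} [MeasurableSpace Ω] (μ : Measure Ω) {s : Set Ω}
    [DecidablePred (· ∈ s)] (hs : MeasurableSet s) (a : Ω) :
    μ[|s].real {a} = if a ∈ s then μ.real {a} / μ.real s else 0 := by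
  rw [measureReal_def, cond_apply hs, ENNReal.toReal_mul, ENNReal.toReal_inv,
    ← measureReal_def, ← measureReal_def]
  split_ifs with ha
  · rw [Set.inter_eq_right.mpr (Set.singleton_subset_iff.mpr ha), inv_mul_eq_div]
  · rw [Set.inter_singleton_eq_empty.mpr ha, measureReal_empty, mul_zero]

/-- The indicator of the event that the random finite set `S` contains `i`. -/
def memIndicator {ι : Type*} [DecidableEq ι] (i : ι) (S : Finset ι) : ℝ := if i ∈ S then 1 else 0

section MemIndicator

variable {ι : Type*} [DecidableEq ι]

lemma memIndicator_eq_one_iff {i : ι} {S : Finset ι} : memIndicator i S = 1 ↔ i ∈ S := by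
  simp [memIndicator]

lemma memIndicator_eq_zero_or_one (i : ι) (S : Finset ι) :
    memIndicator i S = 0 ∨ memIndicator i S = 1 :=
  (ite_eq_or_eq _ _ _).symm

lemma sum_memIndicator [Fintype ι] (S : Finset ι) : ∑ i, memIndicator i S = S.card := by
  simp [memIndicator]

lemma memIndicator_le_memIndicator {i : ι} {R S : Finset ι} (h : i ∈ R → i ∈ S) :
    memIndicator i R ≤ memIndicator i S := by
  unfold memIndicator
  split_ifs <;> grind

end MemIndicator

section RandomSet

variable {n : ℕ} [MeasurableSpace (Finset (Fin n))] [DiscreteMeasurableSpace (Finset (Fin n))]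

lemma negativelyRelated_memIndicator_of_erase_insert {μ : Measure (Finset (Fin n))}
    [IsProbabilityMeasure μ]
    (h : ∀ j, μ {S | j ∈ S} ≠ 0 → ∃ γ : Measure (Finset (Fin n) × Fin n),
      γ.map Prod.fst = μ ∧
      γ.map (fun q => insert j (q.1.erase q.2)) = μ[|{S | j ∈ S}]) :
    NegativelyRelated μ memIndicator := by
  intro j hj
  simp only [memIndicator_eq_one_iff] at hj ⊢
  obtain ⟨γ, hfst, hsnd⟩ := h j hj
  have hγ : IsProbabilityMeasure γ := by
    have : IsProbabilityMeasure (γ.map Prod.fst) := hfst ▸ inferInstance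
    exact Measure.isProbabilityMeasure_of_map Prod.fst
  refine ⟨_, inferInstance, γ, hγ, Prod.fst,
    fun i q => memIndicator i (insert j (q.1.erase q.2)), .of_discrete, hfst,
    fun i => .of_discrete, ?_, fun i hij => .of_forall fun q => ?_⟩
  · rw [← hsnd, Measure.map_map .of_discrete .of_discrete]
    rfl
  · exact memIndicator_le_memIndicator fun hi =>
      Finset.mem_of_mem_erase (Finset.mem_of_mem_insert_of_ne hi hij)

end RandomSet

section Exchangeable

variable {ι : Type*} [Fintype ι] [DecidableEq ι]

lemma card_mul_sum_filter_mem (u : ℕ → ℝ) (j : ι) :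
    Fintype.card ι * ∑ S : Finset ι with j ∈ S, u S.card = ∑ S : Finset ι, u S.card * S.card := by
  have hswap (i : ι) :
      ∑ S : Finset ι with i ∈ S, u S.card = ∑ S : Finset ι with j ∈ S, u S.card := by
    refine Finset.sum_equiv (Equiv.swap i j).finsetCongr (fun S => ?_) fun S _ => ?_ <;>
      simp
  calc Fintype.card ι * ∑ S : Finset ι with j ∈ S, u S.card
      = ∑ i : ι, ∑ S : Finset ι with i ∈ S, u S.card := by simp [hswap]
    _ = ∑ S : Finset ι, u S.card * S.card := by
        simp_rw [Finset.sum_filter]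
        rw [Finset.sum_comm]
        simp [mul_comm]

/-- The coupling of an exchangeable random set `S`, with weights `u S.card`, and its conditional
version given `j ∈ S`: the weight of the pair `(S, x)`, on which the latter is
`insert j (S.erase x)`. If `j ∈ S` then `x = j`, so the set is kept. Otherwise `j` is adjoined to
`S` with weight `β S.card`, encoded by `x = j`, or swapped for a uniformly random `x ∈ S`. -/
noncomputable def swapWeight (u β : ℕ → ℝ) (j : ι) (S : Finset ι) (x : ι) : ℝ :=
  if j ∈ S then (if x = j then u S.card else 0)
  else (if x = j then β S.card else 0) +
    if x ∈ S then (u S.card - β S.card) / S.card else 0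

variable {u β : ℕ → ℝ} {j : ι}

omit [Fintype ι] in
lemma swapWeight_nonneg (hβ : ∀ k, 0 ≤ β k) (hβu : ∀ k, β k ≤ u k) (S : Finset ι) (x : ι) :
    0 ≤ swapWeight u β j S x := by
  have hu := (hβ S.card).trans (hβu S.card)
  have hd : 0 ≤ (u S.card - β S.card) / S.card :=
    div_nonneg (sub_nonneg.mpr (hβu _)) (Nat.cast_nonneg _)
  have := hβ S.card
  unfold swapWeight
  split_ifs <;> positivity

lemma sum_swapWeight (h0 : β 0 = u 0) (S : Finset ι) :
    ∑ x, swapWeight u β j S x = u S.card := by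
  unfold swapWeight
  split_ifs with hj
  · simp
  · rcases S.eq_empty_or_nonempty with rfl | hS
    · simp [h0]
    · have : (S.card : ℝ) ≠ 0 := by exact_mod_cast hS.card_ne_zero
      simp [Finset.sum_add_distrib, mul_div_cancel₀, this]

omit [Fintype ι] in
lemma insert_eq_insert_iff {S Q : Finset ι} (hS : j ∉ S) (hQ : j ∉ Q) :
    insert j S = insert j Q ↔ S = Q :=
  ⟨fun h => by rw [← Finset.erase_insert hS, h, Finset.erase_insert hQ], congrArg _⟩

lemma sum_swapWeight_self {Q : Finset ι} (hQ : j ∉ Q) :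
    ∑ S with insert j (S.erase j) = insert j Q, swapWeight u β j S j =
      u (Q.card + 1) + β Q.card := by
  have hfilter : ({S | insert j (S.erase j) = insert j Q} : Finset (Finset ι)) =
      {insert j Q, Q} := by
    ext S
    by_cases hS : j ∈ S
    · simp [Finset.insert_erase hS, show S ≠ Q by grind]
    · simp [Finset.erase_eq_of_notMem hS, insert_eq_insert_iff hS hQ,
        show S ≠ insert j Q by grind]
  rw [hfilter, Finset.sum_pair (by grind)]
  simp [swapWeight, hQ]

lemma sum_swapWeight_of_ne {Q : Finset ι} (hQ : j ∉ Q) {x : ι} (hx : x ≠ j) :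
    ∑ S with insert j (S.erase x) = insert j Q, swapWeight u β j S x =
      if x ∈ Q then 0 else (u (Q.card + 1) - β (Q.card + 1)) / (Q.card + 1) := by
  have hsupport {S : Finset ι} (hS : insert j (S.erase x) = insert j Q)
      (hne : swapWeight u β j S x ≠ 0) : x ∉ Q ∧ S = insert x Q := by
    have hjS : j ∉ S := fun h => hne (by simp [swapWeight, h, hx])
    have hxS : x ∈ S := by_contra fun h => hne (by simp [swapWeight, h, hx])
    rw [insert_eq_insert_iff (by grind) hQ] at hS
    rw [← hS]
    exact ⟨Finset.notMem_erase x S, (Finset.insert_erase hxS).symm⟩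
  split_ifs with hxQ
  · exact Finset.sum_eq_zero fun S hS => by_contra fun hne =>
      (hsupport (Finset.mem_filter.mp hS).2 hne).1 hxQ
  · rw [Finset.sum_eq_single_of_mem (insert x Q) (by simp [hxQ])
      fun S hS hSne => by_contra fun hne => hSne (hsupport (Finset.mem_filter.mp hS).2 hne).2]
    simp [swapWeight, hx, hx.symm, hQ, hxQ]

lemma sum_swapWeight_insert {Q : Finset ι} (hQ : j ∉ Q) :
    ∑ q : Finset ι × ι with insert j (q.1.erase q.2) = insert j Q, swapWeight u β j q.1 q.2 =
      u (Q.card + 1) + β Q.card + (Fintype.card ι - (Q.card + 1)) *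
        ((u (Q.card + 1) - β (Q.card + 1)) / (Q.card + 1)) := by
  have hcompl : ({x ∈ Finset.univ.erase j | x ∉ Q} : Finset ι) = (insert j Q)ᶜ := by
    ext x
    simp
  have hcard : ((insert j Q)ᶜ.card : ℝ) = Fintype.card ι - (Q.card + 1) := by
    rw [Finset.card_compl, Nat.cast_sub (Finset.card_le_univ _), Finset.card_insert_of_notMem hQ,
      Nat.cast_add_one]
  calc _ = ∑ x, ∑ S with insert j (S.erase x) = insert j Q, swapWeight u β j S x := by
        simp_rw [Finset.sum_filter]
        exact Fintype.sum_prod_type_right _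
    _ = u (Q.card + 1) + β Q.card + ∑ x ∈ Finset.univ.erase j,
          if x ∈ Q then 0 else (u (Q.card + 1) - β (Q.card + 1)) / (Q.card + 1) := by
        rw [← Finset.add_sum_erase _ _ (Finset.mem_univ j), sum_swapWeight_self hQ]
        exact congrArg _ (Finset.sum_congr rfl fun x hx =>
          sum_swapWeight_of_ne hQ (Finset.ne_of_mem_erase hx))
    _ = _ := by
        simp_rw [← ite_not (_ ∈ Q)]
        rw [← Finset.sum_filter, hcompl, Finset.sum_const, nsmul_eq_mul, hcard]

end Exchangeable

section Swap

variable {n : ℕ} [MeasurableSpace (Finset (Fin n))] [DiscreteMeasurableSpace (Finset (Fin n))]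
  {μ : Measure (Finset (Fin n))} {u : ℕ → ℝ}

lemma card_mul_real_setOf_mem [IsFiniteMeasure μ] (hμ : ∀ S, μ.real {S} = u S.card) (j : Fin n) :
    n * μ.real {S | j ∈ S} = ∫ S, (S.card : ℝ) ∂μ := by
  have hmem : μ.real {S | j ∈ S} = ∑ S : Finset (Fin n) with j ∈ S, u S.card := by
    simp_rw [← hμ, sum_measureReal_singleton, Finset.coe_filter_univ]
  rw [hmem, integral_fintype .of_finite]
  simpa [hμ] using card_mul_sum_filter_mem u j

lemma negativelyRelated_memIndicator_of_swap [IsProbabilityMeasure μ] {β : ℕ → ℝ}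
    (hμ : ∀ S, μ.real {S} = u S.card) (hβ : ∀ k, 0 ≤ β k) (hβu : ∀ k, β k ≤ u k)
    (h0 : β 0 = u 0)
    (hbal : ∀ k < n, u (k + 1) + β k + (n - (k + 1)) * ((u (k + 1) - β (k + 1)) / (k + 1)) =
      n * u (k + 1) / ∫ S, (S.card : ℝ) ∂μ) :
    NegativelyRelated μ memIndicator := by
  refine negativelyRelated_memIndicator_of_erase_insert fun j _ => ?_
  have hn : (n : ℝ) ≠ 0 := by exact_mod_cast j.pos.ne'
  have hsum : ∑ q : Finset (Fin n) × Fin n, swapWeight u β j q.1 q.2 = 1 := by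
    simp_rw [Fintype.sum_prod_type, sum_swapWeight h0, ← hμ, sum_measureReal_singleton]
    simp
  obtain ⟨γ, _, hγ⟩ := exists_isProbabilityMeasure_real_singleton_eq
    (w := fun q : Finset (Fin n) × Fin n => swapWeight u β j q.1 q.2)
    ⟨fun q => swapWeight_nonneg hβ hβu q.1 q.2, hsum⟩
  refine ⟨γ, Measure.ext_of_measureReal_singleton fun S => ?_,
    Measure.ext_of_measureReal_singleton fun R => ?_⟩
  · rw [map_real_singleton, Finset.sum_filter, Fintype.sum_prod_type_right]
    simp [hγ, sum_swapWeight h0, hμ]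
  · rw [map_real_singleton, cond_real_singleton _ .of_discrete]
    by_cases hR : j ∈ R
    · obtain ⟨Q, hQ, rfl⟩ : ∃ Q, j ∉ Q ∧ R = insert j Q :=
        ⟨R.erase j, Finset.notMem_erase j R, (Finset.insert_erase hR).symm⟩
      have hQn : Q.card < n := by simpa using Finset.card_lt_univ_of_notMem hQ
      simp_rw [hγ, sum_swapWeight_insert hQ]
      simp [hμ, hQ, hbal _ hQn, ← card_mul_real_setOf_mem hμ j, mul_div_mul_left, hn]
    · refine (Finset.sum_eq_zero fun q hq => ?_).trans (if_neg hR).symm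
      exact absurd ((Finset.mem_filter.mp hq).2 ▸ Finset.mem_insert_self j _) hR

end Swap

section SizeLaw

variable {n : ℕ} {x : ℕ → ℝ}

/-- The mean of the law on `{0, …, n}` with weights `x`. -/
noncomputable def sizeMean (x : ℕ → ℝ) (n : ℕ) : ℝ := ∑ k ∈ Finset.range (n + 1), x k * k

/-- For a law on `{0, …, n}` with weights `x` and mean `M`, the difference `P(X* > k) - P(X > k)`
between the tails of the size-biased law, with weights `x l * l / M`, and of the law itself. -/
noncomputable def sizeBiasExcess (x : ℕ → ℝ) (n k : ℕ) : ℝ :=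
  ∑ l ∈ Finset.Ico (k + 1) (n + 1), x l * (l / sizeMean x n - 1)

lemma sizeBiasExcess_of_le {k : ℕ} (hk : n ≤ k) : sizeBiasExcess x n k = 0 := by
  rw [sizeBiasExcess, Finset.Ico_eq_empty_of_le (by gcongr), Finset.sum_empty]

lemma sizeBiasExcess_eq_add_succ {k : ℕ} (hk : k < n) :
    sizeBiasExcess x n k =
      x (k + 1) * ((k + 1) / sizeMean x n - 1) + sizeBiasExcess x n (k + 1) := by
  rw [sizeBiasExcess, Finset.sum_eq_sum_Ico_succ_bot (by gcongr), Nat.cast_add_one, sizeBiasExcess]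

lemma sizeBiasExcess_eq_sum_range (hsum : ∑ k ∈ Finset.range (n + 1), x k = 1)
    (hmean : sizeMean x n ≠ 0) {k : ℕ} (hk : k ≤ n) :
    sizeBiasExcess x n k = ∑ l ∈ Finset.range (k + 1), x l * (1 - l / sizeMean x n) := by
  have htotal : ∑ l ∈ Finset.range (n + 1), x l * (l / sizeMean x n - 1) = 0 := by
    simp_rw [mul_sub, mul_one, Finset.sum_sub_distrib, ← mul_div_assoc, ← Finset.sum_div, hsum]
    exact sub_eq_zero.mpr (div_self hmean)
  rw [sizeBiasExcess, Finset.sum_Ico_eq_sub _ (by gcongr), htotal, zero_sub,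
    ← Finset.sum_neg_distrib]
  exact Finset.sum_congr rfl fun l _ => by ring

lemma sizeBiasExcess_nonneg (hx : ∀ k, 0 ≤ x k) (hsum : ∑ k ∈ Finset.range (n + 1), x k = 1)
    (hmean : 0 < sizeMean x n) (k : ℕ) : 0 ≤ sizeBiasExcess x n k := by
  rcases le_total n k with hnk | hkn
  · exact (sizeBiasExcess_of_le hnk).ge
  rcases le_total (sizeMean x n) k with hMk | hkM
  · refine Finset.sum_nonneg fun l hl => mul_nonneg (hx l) ?_
    have hkl : (k : ℝ) ≤ l := by
      exact_mod_cast k.le_succ.trans (Finset.mem_Ico.mp hl).1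
    exact sub_nonneg.mpr ((one_le_div hmean).mpr (hMk.trans hkl))
  · rw [sizeBiasExcess_eq_sum_range hsum hmean.ne' hkn]
    refine Finset.sum_nonneg fun l hl => mul_nonneg (hx l) ?_
    have hlk : (l : ℝ) ≤ k := by exact_mod_cast Finset.mem_range_succ_iff.mp hl
    exact sub_nonneg.mpr ((div_le_one hmean).mpr (hlk.trans hkM))

lemma sum_div_choose_mul {ι : Type*} [Fintype ι] (x h : ℕ → ℝ) :
    ∑ S : Finset ι, x S.card / (Fintype.card ι).choose S.card * h S.card =
      ∑ k ∈ Finset.range (Fintype.card ι + 1), x k * h k := by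
  rw [← Finset.powerset_univ,
    Finset.sum_powerset_apply_card fun k => x k / (Fintype.card ι).choose k * h k,
    Finset.card_univ]
  refine Finset.sum_congr rfl fun k hk => ?_
  have : ((Fintype.card ι).choose k : ℝ) ≠ 0 := by
    exact_mod_cast (Nat.choose_pos (Finset.mem_range_succ_iff.mp hk)).ne'
  rw [nsmul_eq_mul]
  field_simp

lemma choose_pred_mul_cast {k : ℕ} (hk : k < n) :
    ((n - 1).choose k : ℝ) * n = n.choose k * (n - k) := by
  obtain ⟨N, rfl⟩ := Nat.exists_eq_add_one.mpr (k.zero_le.trans_lt hk)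
  rw [Nat.add_sub_cancel, ← Nat.cast_sub hk.le]
  exact_mod_cast Nat.choose_mul_succ_eq N k

lemma choose_succ_mul_cast {k : ℕ} (hk : k < n) :
    (n.choose (k + 1) : ℝ) * (k + 1) = n * (n - 1).choose k := by
  obtain ⟨N, rfl⟩ := Nat.exists_eq_add_one.mpr (k.zero_le.trans_lt hk)
  exact_mod_cast (Nat.add_one_mul_choose_eq N k).symm

lemma div_choose_pred_le_div_choose {k : ℕ} {a b : ℝ} (hk : k < n) (h : a ≤ b * (1 - k / n)) :
    a / (n - 1).choose k ≤ b / n.choose k := by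
  have hn : (0 : ℝ) < n := by exact_mod_cast k.zero_le.trans_lt hk
  have hC : (0 : ℝ) < n.choose k := by exact_mod_cast Nat.choose_pos hk.le
  have hC' : (0 : ℝ) < (n - 1).choose k := by exact_mod_cast Nat.choose_pos (Nat.le_pred_of_lt hk)
  have hratio : 1 - (k : ℝ) / n = (n - 1).choose k / n.choose k := by
    rw [eq_div_iff hC.ne', one_sub_div hn.ne', div_mul_eq_mul_div, div_eq_iff hn.ne',
      choose_pred_mul_cast hk, mul_comm]
  rwa [div_le_iff₀ hC', div_mul_eq_mul_div, mul_div_assoc, ← hratio]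

lemma sizeBiasExcess_swap_balance {k : ℕ} (hk : k < n) :
    x (k + 1) / n.choose (k + 1) + sizeBiasExcess x n k / (n - 1).choose k +
      (n - (k + 1)) * ((x (k + 1) / n.choose (k + 1) -
        sizeBiasExcess x n (k + 1) / (n - 1).choose (k + 1)) / (k + 1)) =
    n * (x (k + 1) / n.choose (k + 1)) / sizeMean x n := by
  set e := sizeBiasExcess x n (k + 1) with he
  have hn : (n : ℝ) ≠ 0 := by exact_mod_cast (k.zero_le.trans_lt hk).ne'
  have hk1 : (k + 1 : ℝ) ≠ 0 := by positivity
  have hc : ((n - 1).choose k : ℝ) ≠ 0 := by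
    exact_mod_cast (Nat.choose_pos (Nat.le_pred_of_lt hk)).ne'
  have hx : x (k + 1) / n.choose (k + 1) = x (k + 1) * (k + 1) / (n * (n - 1).choose k) := by
    rw [← choose_succ_mul_cast hk, mul_div_mul_right _ _ hk1]
  have hswap : (n - (k + 1)) * (e / (n - 1).choose (k + 1) / (k + 1)) = e / (n - 1).choose k := by
    rcases le_or_gt n (k + 1) with hnk | hkn
    · simp [he, sizeBiasExcess_of_le hnk]
    · have hC : ((n - 1).choose (k + 1) : ℝ) ≠ 0 := by
        exact_mod_cast (Nat.choose_pos (Nat.le_pred_of_lt hkn)).ne'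
      have hchoose : ((n - 1).choose (k + 1) : ℝ) * (k + 1) = (n - 1).choose k * (n - (k + 1)) := by
        refine mul_right_cancel₀ hn ?_
        have h₁ := choose_pred_mul_cast hkn
        have h₂ := choose_succ_mul_cast hk
        push_cast at h₁
        linear_combination (k + 1 : ℝ) * h₁ + (n - (k + 1) : ℝ) * h₂
      field_simp
      linear_combination -e * hchoose
  rw [sub_div, mul_sub, hswap, hx, sizeBiasExcess_eq_add_succ hk]
  field_simp
  ring

end SizeLaw

section RandomSize

variable {n : ℕ} {x : ℕ → ℝ} [MeasurableSpace (Finset (Fin n))]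
  [DiscreteMeasurableSpace (Finset (Fin n))]

lemma exists_isProbabilityMeasure_real_singleton_eq_div_choose (hx : ∀ k, 0 ≤ x k)
    (hsum : ∑ k ∈ Finset.range (n + 1), x k = 1) :
    ∃ μ : Measure (Finset (Fin n)), IsProbabilityMeasure μ ∧
      ∀ S, μ.real {S} = x S.card / n.choose S.card := by
  refine exists_isProbabilityMeasure_real_singleton_eq ⟨fun S => ?_, ?_⟩
  · have := hx S.card
    positivity
  · simpa [hsum] using sum_div_choose_mul (ι := Fin n) x 1

variable {μ : Measure (Finset (Fin n))}

lemma integral_card_eq_sizeMean [IsFiniteMeasure μ]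
    (hμ : ∀ S, μ.real {S} = x S.card / n.choose S.card) :
    ∫ S, (S.card : ℝ) ∂μ = sizeMean x n := by
  rw [integral_fintype .of_finite]
  simpa [hμ, sizeMean] using sum_div_choose_mul (ι := Fin n) x (fun k => k)

lemma map_card_real_singleton [IsFiniteMeasure μ]
    (hμ : ∀ S, μ.real {S} = x S.card / n.choose S.card) (k : ℕ) :
    (μ.map Finset.card).real {k} = if k ≤ n then x k else 0 := by
  rw [map_real_singleton, Finset.sum_filter]
  simpa [hμ, Nat.lt_succ_iff] using
    sum_div_choose_mul (ι := Fin n) x (fun l => if l = k then 1 else 0)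

theorem negativelyRelated_memIndicator_of_sizeBiasExcess_le [IsProbabilityMeasure μ]
    (hx : ∀ k, 0 ≤ x k) (hsum : ∑ k ∈ Finset.range (n + 1), x k = 1) (hmean : 0 < sizeMean x n)
    (hμ : ∀ S, μ.real {S} = x S.card / n.choose S.card)
    (hexcess : ∀ k < n, sizeBiasExcess x n k ≤ x k * (1 - k / n)) :
    NegativelyRelated μ memIndicator := by
  refine negativelyRelated_memIndicator_of_swap (u := fun k => x k / n.choose k)
    (β := fun k => sizeBiasExcess x n k / (n - 1).choose k) hμ
    (fun k => div_nonneg (sizeBiasExcess_nonneg hx hsum hmean k) (Nat.cast_nonneg _))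
    (fun k => ?_) ?_ fun k hk => ?_
  · rcases lt_or_ge k n with hkn | hnk
    · exact div_choose_pred_le_div_choose hkn (hexcess k hkn)
    · rw [sizeBiasExcess_of_le hnk, zero_div]
      exact div_nonneg (hx k) (Nat.cast_nonneg _)
  · simp [sizeBiasExcess_eq_sum_range hsum hmean.ne' n.zero_le]
  · rw [integral_card_eq_sizeMean hμ]
    exact sizeBiasExcess_swap_balance hk

end RandomSize

section IntervalSupport

variable {n m K : ℕ} {x : ℕ → ℝ}

lemma le_sizeMean (hx : ∀ k, 0 ≤ x k) (hsum : ∑ k ∈ Finset.range (n + 1), x k = 1)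
    (hsupp : ∀ k, x k ≠ 0 → m ≤ k) : (m : ℝ) ≤ sizeMean x n := by
  calc (m : ℝ) = ∑ k ∈ Finset.range (n + 1), x k * m := by rw [← Finset.sum_mul, hsum, one_mul]
    _ ≤ sizeMean x n := Finset.sum_le_sum fun k _ => by
        rcases eq_or_ne (x k) 0 with h | h
        · simp [h]
        · have : (m : ℝ) ≤ k := by exact_mod_cast hsupp k h
          gcongr
          exact hx k

lemma sizeBiasExcess_le_div (hx : ∀ k, 0 ≤ x k) (hsum : ∑ k ∈ Finset.range (n + 1), x k = 1)
    (hm : 0 < m) (hsupp : ∀ k, x k ≠ 0 → k ∈ Set.Icc m (m + K)) (k : ℕ) :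
    sizeBiasExcess x n k ≤ K / m := by
  have hm' : (0 : ℝ) < m := by exact_mod_cast hm
  have hterm (l : ℕ) : x l * (l / sizeMean x n - 1) ≤ x l * (K / m) := by
    rcases eq_or_ne (x l) 0 with h | h
    · simp [h]
    · have hl : (l : ℝ) ≤ m + K := by exact_mod_cast (hsupp l h).2
      refine mul_le_mul_of_nonneg_left ?_ (hx l)
      calc l / sizeMean x n - 1 ≤ (m + K) / m - 1 := by
            gcongr
            exact le_sizeMean hx hsum fun k hk => (hsupp k hk).1
        _ = K / m := by rw [add_div, div_self hm'.ne', add_sub_cancel_left]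
  calc sizeBiasExcess x n k ≤ ∑ l ∈ Finset.Ico (k + 1) (n + 1), x l * (K / m) :=
        Finset.sum_le_sum fun l _ => hterm l
    _ ≤ ∑ l ∈ Finset.range (n + 1), x l * (K / m) :=
        Finset.sum_le_sum_of_subset_of_nonneg
          (fun l hl => Finset.mem_range.mpr (Finset.mem_Ico.mp hl).2)
          fun l _ _ => mul_nonneg (hx l) (by positivity)
    _ = K / m := by rw [← Finset.sum_mul, hsum, one_mul]

lemma sizeBiasExcess_eq_zero (hsum : ∑ k ∈ Finset.range (n + 1), x k = 1)
    (hmean : sizeMean x n ≠ 0) (hsupp : ∀ k, x k ≠ 0 → k ∈ Set.Icc m (m + K)) {k : ℕ}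
    (hk : k ∉ Set.Icc m (m + K)) : sizeBiasExcess x n k = 0 := by
  have hzero {l : ℕ} (hl : l ∉ Set.Icc m (m + K)) : x l = 0 := by_contra (hl ∘ hsupp l)
  rcases le_total n k with hnk | hkn
  · exact sizeBiasExcess_of_le hnk
  rcases lt_or_ge k m with hkm | hmk
  · rw [sizeBiasExcess_eq_sum_range hsum hmean hkn]
    refine Finset.sum_eq_zero fun l hl => ?_
    rw [hzero (by grind), zero_mul]
  · refine Finset.sum_eq_zero fun l hl => ?_
    rw [hzero (by grind), zero_mul]

lemma sizeBiasExcess_le_of_support {δ : ℝ} (hx : ∀ k, 0 ≤ x k)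
    (hsum : ∑ k ∈ Finset.range (n + 1), x k = 1) (hm : 0 < m)
    (hsupp : ∀ k, x k ≠ 0 → k ∈ Set.Icc m (m + K)) (hδ : ∀ k ∈ Set.Icc m (m + K), δ ≤ x k)
    (hKm : K / m ≤ δ / 2) (hn : 2 * (m + K) ≤ n) (k : ℕ) :
    sizeBiasExcess x n k ≤ x k * (1 - k / n) := by
  by_cases hk : k ∈ Set.Icc m (m + K)
  · have hkn : (k : ℝ) / n ≤ 1 / 2 := by
      rw [div_le_div_iff₀ (by exact_mod_cast (by lia : 0 < n)) two_pos]
      exact_mod_cast (by grind : k * 2 ≤ 1 * n)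
    calc sizeBiasExcess x n k ≤ K / m := sizeBiasExcess_le_div hx hsum hm hsupp k
      _ ≤ δ * (1 - 1 / 2) := by linarith
      _ ≤ x k * (1 - k / n) := by
          gcongr
          exacts [hx k, hδ k hk]
  · have hmean : sizeMean x n ≠ 0 := ne_of_gt <| (Nat.cast_pos.mpr hm).trans_le <|
      le_sizeMean hx hsum fun k hk => (hsupp k hk).1
    rw [sizeBiasExcess_eq_zero hsum hmean hsupp hk, by_contra (hk ∘ hsupp k), zero_mul]

end IntervalSupport

lemma exists_negativelyRelated_identDistrib_natCast {ρ : Measure ℕ} [IsProbabilityMeasure ρ]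
    {m K : ℕ} {δ : ℝ} (hm : 0 < m) (hρ : ρ.real (Set.Icc m (m + K)) = 1)
    (hδ : ∀ k ∈ Set.Icc m (m + K), δ ≤ ρ.real {k}) (hKm : K / m ≤ δ / 2) :
    ∃ (n : ℕ) (_ : 0 < n) (Ω : Type) (_ : MeasurableSpace Ω) (μ : Measure Ω)
      (_ : IsProbabilityMeasure μ) (I : Fin n → Ω → ℝ),
      (∀ i, Measurable (I i)) ∧ (∀ i ω, I i ω = 0 ∨ I i ω = 1) ∧ NegativelyRelated μ I ∧
      IdentDistrib (fun ω => ∑ i, I i ω) Nat.cast μ ρ := by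
  have hnonneg (k : ℕ) : 0 ≤ ρ.real {k} := measureReal_nonneg
  have hsupp (k : ℕ) (hk : ρ.real {k} ≠ 0) : k ∈ Set.Icc m (m + K) := by
    by_contra hkI
    have hcompl : ρ.real (Set.Icc m (m + K))ᶜ = 0 := by
      rw [probReal_compl_eq_one_sub .of_discrete, hρ, sub_self]
    exact hk (measureReal_mono_null (Set.singleton_subset_iff.mpr hkI) hcompl)
  obtain ⟨n, hn⟩ : ∃ n, 2 * (m + K) ≤ n := ⟨_, le_rfl⟩
  have hsum : ∑ k ∈ Finset.range (n + 1), ρ.real {k} = 1 := by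
    rw [sum_measureReal_singleton]
    exact measureReal_le_one.antisymm (hρ.ge.trans (measureReal_mono fun k hk => by grind))
  let _ : MeasurableSpace (Finset (Fin n)) := ⊤
  have : DiscreteMeasurableSpace (Finset (Fin n)) := ⟨fun _ => trivial⟩
  obtain ⟨μ, _, hμ⟩ := exists_isProbabilityMeasure_real_singleton_eq_div_choose hnonneg hsum
  have hcard : IdentDistrib Finset.card id μ ρ := by
    refine ⟨.of_discrete, .of_discrete, Measure.ext_of_measureReal_singleton fun k => ?_⟩
    rw [map_card_real_singleton (x := fun k => ρ.real {k}) hμ, Measure.map_id]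
    split_ifs with hk
    · rfl
    · exact (by_contra fun h => hk (by grind) : ρ.real {k} = 0).symm
  refine ⟨n, by lia, _, _, μ, ‹_›, memIndicator, fun i => .of_discrete,
    memIndicator_eq_zero_or_one, ?_, ?_⟩
  · have hmean := (Nat.cast_pos.mpr hm).trans_le
      (le_sizeMean hnonneg hsum fun k hk => (hsupp k hk).1)
    exact negativelyRelated_memIndicator_of_sizeBiasExcess_le hnonneg hsum hmean hμ fun k _ =>
      sizeBiasExcess_le_of_support hnonneg hsum hm hsupp hδ hKm hn k
  · simpa [Function.comp_def, sum_memIndicator] using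
      hcard.comp (u := (Nat.cast : ℕ → ℝ)) .of_discrete

theorem exists_negativelyRelated_identDistrib {K : ℕ} {ν : Measure (Fin (K + 1))}
    [IsProbabilityMeasure ν] (hν : ∀ i, 0 < ν.real {i}) :
    ∃ (m n : ℕ) (_ : 0 < n) (Ω : Type) (_ : MeasurableSpace Ω) (μ : Measure Ω)
      (_ : IsProbabilityMeasure μ) (I : Fin n → Ω → ℝ),
      (∀ i, Measurable (I i)) ∧ (∀ i ω, I i ω = 0 ∨ I i ω = 1) ∧ NegativelyRelated μ I ∧
      IdentDistrib (fun ω => ∑ i, I i ω) (fun k : Fin (K + 1) => (m + k : ℝ)) μ ν := by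
  obtain ⟨i₀, hi₀⟩ := Finite.exists_min fun i => ν.real {i}
  have hδ : 0 < ν.real {i₀} / 2 := half_pos (hν i₀)
  obtain ⟨m, hm⟩ := exists_nat_gt (K / (ν.real {i₀} / 2))
  have hm0 : (0 : ℝ) < m := (div_nonneg K.cast_nonneg hδ.le).trans_lt hm
  let shift (i : Fin (K + 1)) : ℕ := m + i
  have hshift : IsProbabilityMeasure (ν.map shift) := Measure.isProbabilityMeasure_map .of_discrete
  have hsupp : (ν.map shift).real (Set.Icc m (m + K)) = 1 := by
    rw [map_measureReal_apply .of_discrete .of_discrete, Set.preimage_eq_univ_iff.mpr,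
      probReal_univ]
    rintro _ ⟨i, rfl⟩
    grind
  have hlower (k : ℕ) (hk : k ∈ Set.Icc m (m + K)) : ν.real {i₀} ≤ (ν.map shift).real {k} := by
    rw [map_measureReal_apply .of_discrete .of_discrete]
    refine (hi₀ ⟨k - m, by grind⟩).trans (measureReal_mono ?_)
    exact Set.singleton_subset_iff.mpr (Nat.add_sub_cancel' hk.1)
  obtain ⟨n, hn, Ω, _, μ, _, I, hI, hI01, hneg, hlaw⟩ :=
    exists_negativelyRelated_identDistrib_natCast (Nat.cast_pos.mp hm0) hsupp hlower
      ((div_lt_comm₀ hδ hm0).mp hm).le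
  refine ⟨m, n, hn, Ω, _, μ, ‹_›, I, hI, hI01, hneg, hlaw.aemeasurable_fst, .of_discrete, ?_⟩
  rw [hlaw.map_eq, Measure.map_map .of_discrete .of_discrete]
  simp [Function.comp_def, shift]

section Perturbation

variable {Ω : Type*} [Finite Ω] [MeasurableSpace Ω] [DiscreteMeasurableSpace Ω]

lemma exists_real_singleton_pos_of_lt {P : Measure Ω} [IsProbabilityMeasure P]
    {X : Ω → ℝ} {α p A : ℝ} {a : Ω} (hp : p < P.real {a}) (hA : A < Var[X; P])
    (ha : P[X] + α * √(Var[X; P]) < X a) :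
    ∃ ν : Measure Ω, IsProbabilityMeasure ν ∧ (∀ b, 0 < ν.real {b}) ∧
      p < ν.real {a} ∧ A < Var[X; ν] ∧ ν[X] + α * √(Var[X; ν]) < X a := by
  cases nonempty_fintype Ω
  let mean (w : Ω → ℝ) := ∑ b, w b * X b
  let var (w : Ω → ℝ) := ∑ b, w b * (X b - mean w) ^ 2
  have hmean : Continuous mean := by fun_prop
  have hvar : Continuous var := by fun_prop
  have hopen : IsOpen {w | p < w a ∧ A < var w ∧ mean w + α * √(var w) < X a} :=
    (isOpen_lt continuous_const (continuous_apply a)).inter <|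
      (isOpen_lt continuous_const hvar).inter <|
        isOpen_lt (hmean.add (continuous_const.mul hvar.sqrt)) continuous_const
  have hP : (fun b => P.real {b}) ∈ stdSimplex ℝ Ω :=
    ⟨fun b => measureReal_nonneg, by simp⟩
  simp only [variance_fintype, integral_fintype .of_finite, smul_eq_mul] at hA ha
  obtain ⟨v, hv, hpos, hvU⟩ := exists_pos_mem_stdSimplex_of_isOpen hopen hP ⟨hp, hA, ha⟩
  obtain ⟨ν, hprob, hν⟩ := exists_isProbabilityMeasure_real_singleton_eq hv
  simp only [← hν] at hpos
  obtain rfl : v = fun b => ν.real {b} := funext fun b => (hν b).symm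
  refine ⟨ν, hprob, hpos, ?_⟩
  simp only [variance_fintype, integral_fintype .of_finite, smul_eq_mul]
  exact hvU

lemma exists_isProbabilityMeasure_twoPoint (X : Ω → ℝ) {a b : Ω} (hab : a ≠ b) {q : ℝ}
    (hq : q ∈ Set.Icc 0 1) :
    ∃ P : Measure Ω, IsProbabilityMeasure P ∧ P.real {a} = q ∧
      P[X] = q * X a + (1 - q) * X b ∧ Var[X; P] = q * (1 - q) * (X a - X b) ^ 2 := by
  classical
  cases nonempty_fintype Ω
  have hsum (f : Ω → ℝ) :
      ∑ c, (q • Pi.single a 1 + (1 - q) • Pi.single b 1 : Ω → ℝ) c * f c =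
        q * f a + (1 - q) * f b := by
    simp [add_mul, Finset.sum_add_distrib, Pi.single_apply]
  obtain ⟨P, hprob, hP⟩ := exists_isProbabilityMeasure_real_singleton_eq <|
    convex_stdSimplex ℝ Ω (single_mem_stdSimplex ℝ a) (single_mem_stdSimplex ℝ b)
      hq.1 (sub_nonneg.mpr hq.2) (add_sub_cancel q 1)
  refine ⟨P, hprob, by simp [hP, hab], ?_, ?_⟩
  · simpa only [integral_fintype .of_finite, hP, smul_eq_mul] using hsum X
  · simp only [variance_fintype, hP, hsum]
    ring

end Perturbation

theorem exists_measure_fin_lt_real_tail {α p : ℝ} (hp : p < 1 / (1 + α ^ 2)) (A : ℝ) :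
    ∃ (K : ℕ) (ν : Measure (Fin (K + 1))), IsProbabilityMeasure ν ∧ (∀ i, 0 < ν.real {i}) ∧
      A < Var[fun k : Fin (K + 1) => (k : ℝ); ν] ∧
      p < ν.real {k | ∫ l, (l : ℝ) ∂ν + α * √(Var[fun k : Fin (K + 1) => (k : ℝ); ν]) < k} := by
  obtain ⟨q, hq, hqα⟩ := exists_between (max_lt hp (by positivity : 0 < 1 / (1 + α ^ 2)))
  obtain ⟨hpq, hq0⟩ := max_lt_iff.mp hq
  have hαq : α ^ 2 * q < 1 - q := by
    rw [lt_div_iff₀ (by positivity)] at hqα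
    linarith
  have hq1 : 0 < 1 - q := lt_of_le_of_lt (by positivity) hαq
  have hqq : 0 < q * (1 - q) := mul_pos hq0 hq1
  obtain ⟨K, hK⟩ := exists_nat_gt (max 1 (A / (q * (1 - q))))
  obtain ⟨hK1, hKA⟩ := max_lt_iff.mp hK
  have hK0 : 0 < K := by exact_mod_cast one_pos.trans hK1
  obtain ⟨P, _, hlast, hmean, hvar⟩ :=
    exists_isProbabilityMeasure_twoPoint (fun k : Fin (K + 1) => (k : ℝ)) (a := Fin.last K) (b := 0)
      (by simpa using hK0.ne') (q := q) ⟨hq0.le, by linarith⟩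
  have hα : α * √(q * (1 - q)) < 1 - q := by
    refine lt_of_pow_lt_pow_left₀ 2 hq1.le ?_
    calc (α * √(q * (1 - q))) ^ 2 = α ^ 2 * q * (1 - q) := by
          rw [mul_pow, Real.sq_sqrt hqq.le, mul_assoc]
      _ < (1 - q) ^ 2 := by
          rw [sq (1 - q)]
          gcongr
  simp only [Fin.val_last, Fin.val_zero, Nat.cast_zero, mul_zero, add_zero, sub_zero] at hmean hvar
  have hAP : A < q * (1 - q) * K ^ 2 := ((div_lt_iff₀' hqq).mp hKA).trans_le <|
    mul_le_mul_of_nonneg_left (le_self_pow₀ hK1.le two_ne_zero) hqq.le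
  have htailP : q * K + α * √(q * (1 - q) * K ^ 2) < K := by
    rw [Real.sqrt_mul hqq.le, Real.sqrt_sq K.cast_nonneg]
    linarith [mul_lt_mul_of_pos_right hα (Nat.cast_pos.mpr hK0)]
  obtain ⟨ν, hprob, hpos, hpν, hAν, htail⟩ := exists_real_singleton_pos_of_lt (hlast ▸ hpq)
    (hvar ▸ hAP) (by rw [hmean, hvar]; exact htailP)
  exact ⟨K, ν, hprob, hpos, hAν,
    hpν.trans_le (measureReal_mono (Set.singleton_subset_iff.mpr htail))⟩

theorem negatively_related_no_gaussian_tail_general {α p : ℝ} (hp : p < 1 / (1 + α ^ 2)) (A : ℝ) :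
    ∃ (n : ℕ) (_ : 0 < n) (Ω : Type) (_ : MeasurableSpace Ω) (μ : Measure Ω)
      (_ : IsProbabilityMeasure μ) (I : Fin n → Ω → ℝ),
      (∀ i, Measurable (I i)) ∧
      (∀ i ω, I i ω = 0 ∨ I i ω = 1) ∧
      NegativelyRelated μ I ∧
      A < variance (fun ω => ∑ i, I i ω) μ ∧
      p < (μ {ω | (∫ x, ∑ i, I i x ∂μ)
            + α * Real.sqrt (variance (fun ω => ∑ i, I i ω) μ) < ∑ i, I i ω}).toReal := by
  obtain ⟨K, ν, _, hν, hA, htail⟩ := exists_measure_fin_lt_real_tail hp A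
  obtain ⟨m, n, hn, Ω, _, μ, _, I, hI, hI01, hneg, hlaw⟩ := exists_negativelyRelated_identDistrib hν
  have hvar : Var[fun ω => ∑ i, I i ω; μ] = Var[fun k : Fin (K + 1) => (k : ℝ); ν] :=
    hlaw.variance_eq.trans (variance_const_add .of_discrete m)
  have hmean : ∫ ω, ∑ i, I i ω ∂μ = m + ∫ k : Fin (K + 1), (k : ℝ) ∂ν := by
    rw [hlaw.integral_eq, integral_add .of_finite .of_finite]
    simp
  refine ⟨n, hn, Ω, _, μ, ‹_›, I, hI, hI01, hneg, hvar ▸ hA, htail.trans_eq ?_⟩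
  rw [hvar, hmean, measureReal_def]
  congr 1
  refine Eq.trans ?_ (hlaw.measure_mem_eq measurableSet_Ioi).symm
  congr with k
  simp [add_assoc]

/-- For every `α > 0`, `0 < c < 1/e` and `A < ∞` there is a finite sum
`X = I₁ + ⋯ + Iₙ` of negatively related indicator variables with
`σ² = Var X > A` and `P(X > EX + a) > c·e^{-a/σ}`, where `σ = √(Var X)` and
`a = α·σ`. Hence Bennett/Bernstein-type bounds with the true variance fail in
general for sums of negatively related indicators. -/
theorem negatively_related_no_gaussian_tail (α : ℝ) (hα : 0 < α)
    (c : ℝ) (hc0 : 0 < c) (hc1 : c < 1 / Real.exp 1) (A : ℝ) :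
    ∃ (n : ℕ) (_ : 0 < n) (Ω : Type) (_ : MeasurableSpace Ω) (μ : Measure Ω)
      (_ : IsProbabilityMeasure μ) (I : Fin n → Ω → ℝ),
      (∀ i, Measurable (I i)) ∧
      (∀ i ω, I i ω = 0 ∨ I i ω = 1) ∧
      NegativelyRelated μ I ∧
      A < variance (fun ω => ∑ i, I i ω) μ ∧
      c * Real.exp (-(α * Real.sqrt (variance (fun ω => ∑ i, I i ω) μ)
            / Real.sqrt (variance (fun ω => ∑ i, I i ω) μ)))
        < (μ {ω | (∫ x, ∑ i, I i x ∂μ)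
              + α * Real.sqrt (variance (fun ω => ∑ i, I i ω) μ) < ∑ i, I i ω}).toReal := by
  have hc : c < 1 := hc1.trans ((div_lt_one (Real.exp_pos 1)).mpr (Real.one_lt_exp_iff.mpr one_pos))
  have hcα : c * Real.exp (-α) < 1 / (1 + α ^ 2) := calc
    c * Real.exp (-α) < 1 / Real.exp α := by
      rw [Real.exp_neg, ← div_eq_mul_inv]
      gcongr
    _ < 1 / (1 + α ^ 2) := one_div_lt_one_div_of_lt (by positivity) (one_add_sq_lt_exp hα)
  obtain ⟨n, hn, Ω, _, μ, _, I, hI, hI01, hneg, hA, htail⟩ :=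
    negatively_related_no_gaussian_tail_general hcα (max A 0)
  exact ⟨n, hn, Ω, _, μ, ‹_›, I, hI, hI01, hneg, (le_max_left A 0).trans_lt hA, by
    rwa [mul_div_cancel_right₀ _ (Real.sqrt_pos.mpr ((le_max_right A 0).trans_lt hA)).ne']⟩
end

section
/- Let μ be a finite positive Borel measure on [0,1] with ∫₀¹ x² dμ > 0 and ∫₀¹ (1−x)² dμ > 0. Define m = μ([0,1]), x₀ = (∫₀¹ x² dμ)/(∫₀¹ x dμ), α₀ = (∫₀¹ x dμ)²/(∫₀¹ x² dμ), x₁ = 1 − (∫₀¹ (1−x)² dμ)/(∫₀¹ (1−x) dμ), and α₁ = (∫₀¹ (1−x) dμ)²/(∫₀¹ (1−x)² dμ). If f is a three times continuously differentiable real function on [0,1] with f''' ≥ 0 on [0,1], then (m − α₀)·f(0) + α₀·f(x₀) ≤ ∫₀¹ f dμ ≤ (m − α₁)·f(1) + α₁·f(x₁). If instead f''' ≤ 0 on [0,1], these two inequalities are reversed. -/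
open MeasureTheory

/-!
Let `f'` be convex and let `q` be the quadratic which agrees with `f` to first order at `c` and
takes the value of `f` at `p`. Then `(f x - q x) (x - p) ≥ 0`, because
`(f x - q x) / (x - c) ^ 2 = f[c, c, x] - f[c, c, p]` and the divided difference `f[c, c, x]` is
monotone in `x`: it is the integral over `t ∈ [0, 1]` of `t` times the slope of `f'` between `c` and
`c + t (x - c)`, which is monotone in `x` by convexity. If `c` is the free node of the two-point
measure with fixed node `p` and the same moments of order at most two as `μ`, that measure gives `f`
the integral `∫ q ∂μ`, which lies below `∫ f ∂μ` when `p` is the left endpoint and above it when `p`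
is the right endpoint.
-/

section DividedDifference

variable {f f' : ℝ → ℝ} {s : Set ℝ} {c p x : ℝ}

/-- The divided difference `f[c, c, x]` with a double node at `c`, where `f'` is the derivative
of `f`. It is meaningful only for `x ≠ c`: division by zero gives it the value `0` at `x = c`. -/
noncomputable def confluentSlope (f f' : ℝ → ℝ) (c x : ℝ) : ℝ :=
  (f x - f c - f' c * (x - c)) / (x - c) ^ 2

lemma sq_mul_confluentSlope (f f' : ℝ → ℝ) (c x t : ℝ) :
    t ^ 2 * confluentSlope f f' c (c + t * (x - c)) =
      (f (c + t * (x - c)) - f c - f' c * (t * (x - c))) / (x - c) ^ 2 := by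
  rcases eq_or_ne t 0 with rfl | ht
  · simp
  · rw [confluentSlope, add_sub_cancel_left, mul_pow, mul_div_assoc',
      mul_div_mul_left _ _ (pow_ne_zero 2 ht)]

lemma hasDerivWithinAt_sq_mul_confluentSlope
    (hf : ∀ x ∈ s, HasDerivWithinAt f (f' x) s x) (hs : Convex ℝ s) (hc : c ∈ s) (hx : x ∈ s)
    (hxc : x ≠ c) {t : ℝ} (ht : t ∈ Set.Icc (0 : ℝ) 1) :
    HasDerivWithinAt (fun t ↦ t ^ 2 * confluentSlope f f' c (c + t * (x - c)))
      (t * slope f' c (c + t * (x - c))) (Set.Icc 0 1) t := by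
  have hmaps : Set.MapsTo (fun t : ℝ ↦ c + t * (x - c)) (Set.Icc 0 1) s :=
    fun t ht ↦ hs.add_smul_sub_mem hc hx ht
  have hmul : HasDerivWithinAt (fun t : ℝ ↦ t * (x - c)) (x - c) (Set.Icc 0 1) t := by
    simpa using (hasDerivWithinAt_id t (Set.Icc (0 : ℝ) 1)).mul_const (x - c)
  have hcomp := (hf _ (hmaps ht)).comp t (hmul.const_add c) hmaps
  have hslope : t * slope f' c (c + t * (x - c)) =
      (f' (c + t * (x - c)) * (x - c) - f' c * (x - c)) / (x - c) ^ 2 := by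
    have hxc' : x - c ≠ 0 := sub_ne_zero.2 hxc
    rcases eq_or_ne t 0 with rfl | ht0
    · simp
    · rw [slope_def_field]
      field_simp
      ring
  simp only [sq_mul_confluentSlope]
  rw [hslope]
  exact ((hcomp.sub_const (f c)).sub (hmul.const_mul (f' c))).div_const ((x - c) ^ 2)

lemma monotoneOn_confluentSlope (hf : ∀ x ∈ s, HasDerivWithinAt f (f' x) s x)
    (hf' : ConvexOn ℝ s f') (hc : c ∈ s) : MonotoneOn (confluentSlope f f' c) (s \ {c}) := by
  rintro x ⟨hx, hxc : x ≠ c⟩ y ⟨hy, hyc : y ≠ c⟩ hxy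
  let φ (z t : ℝ) : ℝ := t ^ 2 * confluentSlope f f' c (c + t * (z - c))
  have hderiv (t : ℝ) (ht : t ∈ Set.Icc (0 : ℝ) 1) :=
    (hasDerivWithinAt_sq_mul_confluentSlope hf hf'.1 hc hy hyc ht).sub
      (hasDerivWithinAt_sq_mul_confluentSlope hf hf'.1 hc hx hxc ht)
  have hmem {z t : ℝ} (hz : z ∈ s) (hzc : z ≠ c) (ht : t ∈ Set.Ioo (0 : ℝ) 1) :
      c + t * (z - c) ∈ s \ {c} :=
    ⟨hf'.1.add_smul_sub_mem hc hz (Set.Ioo_subset_Icc_self ht),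
      by simp [ht.1.ne', sub_ne_zero.2 hzc]⟩
  have hmono : MonotoneOn (φ y - φ x) (Set.Icc 0 1) := by
    refine monotoneOn_of_hasDerivWithinAt_nonneg (convex_Icc 0 1)
      (fun t ht ↦ (hderiv t ht).continuousWithinAt)
      (fun t ht ↦ (hderiv t (interior_subset ht)).mono interior_subset) fun t ht ↦ ?_
    rw [interior_Icc] at ht
    have hslope := hf'.slope_mono hc (hmem hx hxc ht) (hmem hy hyc ht)
      (by gcongr; exact ht.1.le)
    exact sub_nonneg.2 (mul_le_mul_of_nonneg_left hslope ht.1.le)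
  simpa [φ] using hmono (Set.left_mem_Icc.2 zero_le_one) (Set.right_mem_Icc.2 zero_le_one)
    zero_le_one

/-- The Hermite interpolant of `f`, of degree at most two, with a double node at `c` and a simple
node at `p ≠ c`, in Newton form; `f'` is the derivative of `f`. -/
noncomputable def hermiteQuadratic (f f' : ℝ → ℝ) (c p x : ℝ) : ℝ :=
  f c + f' c * (x - c) + confluentSlope f f' c p * (x - c) ^ 2

@[simp]
lemma hermiteQuadratic_double_node (f f' : ℝ → ℝ) (c p : ℝ) :
    hermiteQuadratic f f' c p c = f c := by
  simp [hermiteQuadratic]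

@[simp]
lemma hermiteQuadratic_simple_node (f f' : ℝ → ℝ) (c p : ℝ) :
    hermiteQuadratic f f' c p p = f p := by
  rcases eq_or_ne p c with rfl | hpc
  · simp
  · have hpc' : p - c ≠ 0 := sub_ne_zero.2 hpc
    rw [hermiteQuadratic, confluentSlope]
    field_simp
    ring

lemma hermiteQuadratic_le_hermiteQuadratic (hf : ∀ x ∈ s, HasDerivWithinAt f (f' x) s x)
    (hf' : ConvexOn ℝ s f') (hc : c ∈ s) {p₁ p₂ : ℝ} (hp₁ : p₁ ∈ s \ {c}) (hp₂ : p₂ ∈ s \ {c})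
    (h : p₁ ≤ p₂) (x : ℝ) : hermiteQuadratic f f' c p₁ x ≤ hermiteQuadratic f f' c p₂ x := by
  unfold hermiteQuadratic
  gcongr
  exact monotoneOn_confluentSlope hf hf' hc hp₁ hp₂ h

lemma hermiteQuadratic_le (hf : ∀ x ∈ s, HasDerivWithinAt f (f' x) s x) (hf' : ConvexOn ℝ s f')
    (hc : c ∈ s) (hp : p ∈ s \ {c}) (hx : x ∈ s) (hpx : p ≤ x) :
    hermiteQuadratic f f' c p x ≤ f x := by
  rcases eq_or_ne x c with rfl | hxc
  · simp
  · simpa using hermiteQuadratic_le_hermiteQuadratic hf hf' hc hp ⟨hx, hxc⟩ hpx x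

lemma le_hermiteQuadratic (hf : ∀ x ∈ s, HasDerivWithinAt f (f' x) s x) (hf' : ConvexOn ℝ s f')
    (hc : c ∈ s) (hp : p ∈ s \ {c}) (hx : x ∈ s) (hxp : x ≤ p) :
    f x ≤ hermiteQuadratic f f' c p x := by
  rcases eq_or_ne x c with rfl | hxc
  · simp
  · simpa using hermiteQuadratic_le_hermiteQuadratic hf hf' hc ⟨hx, hxc⟩ hp hxp x

end DividedDifference

section TwoPointMeasure

variable {μ : Measure ℝ} {f f' : ℝ → ℝ} {s : Set ℝ} {p t : ℝ}

/-- The free node of the two-point measure with fixed node `p` which has the same moments of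
order at most two as `μ`. -/
noncomputable def momentNode (μ : Measure ℝ) (p : ℝ) : ℝ :=
  p - (∫ x, (p - x) ^ 2 ∂μ) / ∫ x, (p - x) ∂μ

/-- The mass which the two-point measure with fixed node `p` and the same moments of order at most
two as `μ` gives to its free node `momentNode μ p`. -/
noncomputable def momentWeight (μ : Measure ℝ) (p : ℝ) : ℝ :=
  (∫ x, (p - x) ∂μ) ^ 2 / ∫ x, (p - x) ^ 2 ∂μ

/-- The integral of `f` with respect to the two-point measure with fixed node `p` which has the
same moments of order at most two as `μ`. -/
noncomputable def twoPointIntegral (μ : Measure ℝ) (p : ℝ) (f : ℝ → ℝ) : ℝ :=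
  (μ.real Set.univ - momentWeight μ p) * f p + momentWeight μ p * f (momentNode μ p)

lemma twoPointIntegral_zero (μ : Measure ℝ) (f : ℝ → ℝ) :
    twoPointIntegral μ 0 f =
      (μ.real Set.univ - (∫ x, x ∂μ) ^ 2 / ∫ x, x ^ 2 ∂μ) * f 0 +
        (∫ x, x ∂μ) ^ 2 / (∫ x, x ^ 2 ∂μ) * f ((∫ x, x ^ 2 ∂μ) / ∫ x, x ∂μ) := by
  have hneg : ∫ x, -x ∂μ = -∫ x, x ∂μ := integral_neg _
  simp [twoPointIntegral, momentWeight, momentNode, hneg, div_neg]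

lemma twoPointIntegral_neg (μ : Measure ℝ) (p : ℝ) (f : ℝ → ℝ) :
    twoPointIntegral μ p (fun x ↦ -f x) = -twoPointIntegral μ p f := by
  unfold twoPointIntegral
  ring

lemma integral_quadratic_eq_twoPointIntegral [IsFiniteMeasure μ] (hμ : MemLp id 2 μ)
    (h₁ : ∫ x, (p - x) ∂μ ≠ 0) (h₂ : ∫ x, (p - x) ^ 2 ∂μ ≠ 0) (d k l r : ℝ) :
    ∫ x, (k + l * (x - d) + r * (x - d) ^ 2) ∂μ =
      twoPointIntegral μ p fun x ↦ k + l * (x - d) + r * (x - d) ^ 2 := by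
  have hsub : MemLp (fun x ↦ p - x) 2 μ := (memLp_const p).sub hμ
  have hexpand (x : ℝ) : k + l * (x - d) + r * (x - d) ^ 2 =
      (k + l * (p - d) + r * (p - d) ^ 2) + (-l - 2 * r * (p - d)) * (p - x) + r * (p - x) ^ 2 := by
    ring
  have hint₁ (a : ℝ) : Integrable (fun x ↦ a * (p - x)) μ :=
    (hsub.integrable one_le_two).const_mul a
  have hint₂ (a : ℝ) : Integrable (fun x ↦ a * (p - x) ^ 2) μ := hsub.integrable_sq.const_mul a
  rw [integral_congr_ae (.of_forall hexpand), integral_add (by fun_prop) (hint₂ _),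
    integral_add (integrable_const _) (hint₁ _), integral_const, integral_const_mul,
    integral_const_mul, smul_eq_mul, twoPointIntegral, momentWeight, momentNode]
  field_simp
  ring

lemma momentNode_ne_self (h₁ : ∫ x, (p - x) ∂μ ≠ 0) (h₂ : ∫ x, (p - x) ^ 2 ∂μ ≠ 0) :
    momentNode μ p ≠ p := by
  simpa [momentNode] using ⟨h₂, h₁⟩

lemma integral_hermiteQuadratic [IsFiniteMeasure μ] (hμ : MemLp id 2 μ)
    (h₁ : ∫ x, (p - x) ∂μ ≠ 0) (h₂ : ∫ x, (p - x) ^ 2 ∂μ ≠ 0) (f f' : ℝ → ℝ) :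
    ∫ x, hermiteQuadratic f f' (momentNode μ p) p x ∂μ = twoPointIntegral μ p f :=
  calc
    _ = twoPointIntegral μ p (hermiteQuadratic f f' (momentNode μ p) p) :=
      integral_quadratic_eq_twoPointIntegral hμ h₁ h₂ ..
    _ = twoPointIntegral μ p f := by simp [twoPointIntegral]

lemma integrable_hermiteQuadratic [IsFiniteMeasure μ] (hμ : MemLp id 2 μ) (f f' : ℝ → ℝ)
    (c p : ℝ) : Integrable (hermiteQuadratic f f' c p) μ := by
  have hsub : MemLp (fun x ↦ x - c) 2 μ := hμ.sub (memLp_const c)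
  exact ((integrable_const _).add ((hsub.integrable one_le_two).const_mul _)).add
    (hsub.integrable_sq.const_mul _)

lemma twoPointIntegral_le_integral [IsFiniteMeasure μ] (hμ : MemLp id 2 μ)
    (h₁ : ∫ x, (p - x) ∂μ ≠ 0) (h₂ : ∫ x, (p - x) ^ 2 ∂μ ≠ 0)
    (hf : ∀ x ∈ s, HasDerivWithinAt f (f' x) s x) (hf' : ConvexOn ℝ s f')
    (hfμ : Integrable f μ) (hp : p ∈ s) (hnode : momentNode μ p ∈ s)
    (hs : ∀ᵐ x ∂μ, x ∈ s ∩ Set.Ici p) :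
    twoPointIntegral μ p f ≤ ∫ x, f x ∂μ := by
  rw [← integral_hermiteQuadratic hμ h₁ h₂ f f']
  refine integral_mono_ae (integrable_hermiteQuadratic hμ ..) hfμ (hs.mono fun x hx ↦ ?_)
  exact hermiteQuadratic_le hf hf' hnode ⟨hp, (momentNode_ne_self h₁ h₂).symm⟩ hx.1 hx.2

lemma integral_le_twoPointIntegral [IsFiniteMeasure μ] (hμ : MemLp id 2 μ)
    (h₁ : ∫ x, (p - x) ∂μ ≠ 0) (h₂ : ∫ x, (p - x) ^ 2 ∂μ ≠ 0)
    (hf : ∀ x ∈ s, HasDerivWithinAt f (f' x) s x) (hf' : ConvexOn ℝ s f')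
    (hfμ : Integrable f μ) (hp : p ∈ s) (hnode : momentNode μ p ∈ s)
    (hs : ∀ᵐ x ∂μ, x ∈ s ∩ Set.Iic p) :
    ∫ x, f x ∂μ ≤ twoPointIntegral μ p f := by
  rw [← integral_hermiteQuadratic hμ h₁ h₂ f f']
  refine integral_mono_ae hfμ (integrable_hermiteQuadratic hμ ..) (hs.mono fun x hx ↦ ?_)
  exact le_hermiteQuadratic hf hf' hnode ⟨hp, (momentNode_ne_self h₁ h₂).symm⟩ hx.1 hx.2

end TwoPointMeasure

section CompactInterval

variable {μ : Measure ℝ} [IsFiniteMeasure μ] {p t : ℝ}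

lemma mem_uIcc_iff_mul_nonneg {R : Type*} [CommRing R] [LinearOrder R] [IsStrictOrderedRing R]
    {a b x : R} : x ∈ Set.uIcc a b ↔ 0 ≤ (x - a) * (b - x) := by
  rw [Set.mem_uIcc, mul_nonneg_iff]
  simp only [sub_nonneg, sub_nonpos]
  tauto

lemma integrable_of_continuousOn_of_ae_mem {X E : Type*} [TopologicalSpace X] [T2Space X]
    [MeasurableSpace X] [OpensMeasurableSpace X] [NormedAddCommGroup E] {μ : Measure X}
    [IsFiniteMeasureOnCompacts μ] {f : X → E} {K : Set X} (hK : IsCompact K)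
    (hμ : ∀ᵐ x ∂μ, x ∈ K) (hf : ContinuousOn f K) : Integrable f μ := by
  rw [← Measure.restrict_eq_self_of_ae_mem hμ]
  exact hf.integrableOn_compact hK

lemma memLp_two_id_of_ae_mem {K : Set ℝ} (hK : IsCompact K) (hμ : ∀ᵐ x ∂μ, x ∈ K) :
    MemLp id 2 μ :=
  (memLp_two_iff_integrable_sq (by fun_prop)).2
    (integrable_of_continuousOn_of_ae_mem hK hμ (by fun_prop))

lemma integral_sub_sq_le_mul_integral_sub (hμ : ∀ᵐ x ∂μ, x ∈ Set.uIcc p t) :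
    ∫ x, (p - x) ^ 2 ∂μ ≤ (p - t) * ∫ x, (p - x) ∂μ := by
  have hint {g : ℝ → ℝ} (hg : Continuous g) : Integrable g μ :=
    integrable_of_continuousOn_of_ae_mem isCompact_uIcc hμ hg.continuousOn
  rw [← integral_const_mul]
  refine integral_mono_ae (hint (by fun_prop)) (hint (by fun_prop)) (hμ.mono fun x hx ↦ ?_)
  linear_combination mem_uIcc_iff_mul_nonneg.1 hx

lemma integral_sub_ne_zero (hμ : ∀ᵐ x ∂μ, x ∈ Set.uIcc p t) (h₂ : 0 < ∫ x, (p - x) ^ 2 ∂μ) :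
    ∫ x, (p - x) ∂μ ≠ 0 :=
  right_ne_zero_of_mul (h₂.trans_le (integral_sub_sq_le_mul_integral_sub hμ)).ne'

lemma momentNode_mem_uIcc (hμ : ∀ᵐ x ∂μ, x ∈ Set.uIcc p t) (h₂ : 0 < ∫ x, (p - x) ^ 2 ∂μ) :
    momentNode μ p ∈ Set.uIcc p t := by
  have h₁ := integral_sub_ne_zero hμ h₂
  have hle := sub_nonneg.2 (integral_sub_sq_le_mul_integral_sub hμ)
  have hprod : (momentNode μ p - p) * (t - momentNode μ p) =
      (∫ x, (p - x) ^ 2 ∂μ) * ((p - t) * (∫ x, (p - x) ∂μ) - ∫ x, (p - x) ^ 2 ∂μ) /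
        (∫ x, (p - x) ∂μ) ^ 2 := by
    rw [momentNode]
    field_simp
    ring
  rw [mem_uIcc_iff_mul_nonneg, hprod]
  positivity

lemma twoPointIntegral_le_integral_le_twoPointIntegral {a b : ℝ} {f f' : ℝ → ℝ}
    (hμ : ∀ᵐ x ∂μ, x ∈ Set.Icc a b) (ha : 0 < ∫ x, (a - x) ^ 2 ∂μ)
    (hb : 0 < ∫ x, (b - x) ^ 2 ∂μ)
    (hf : ∀ x ∈ Set.Icc a b, HasDerivWithinAt f (f' x) (Set.Icc a b) x)
    (hf' : ConvexOn ℝ (Set.Icc a b) f') :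
    twoPointIntegral μ a f ≤ ∫ x, f x ∂μ ∧ ∫ x, f x ∂μ ≤ twoPointIntegral μ b f := by
  have : NeZero μ := ⟨by rintro rfl; simp at ha⟩
  have hab : a ≤ b := Set.nonempty_Icc.1 hμ.exists
  have hμa : ∀ᵐ x ∂μ, x ∈ Set.uIcc a b := by rwa [Set.uIcc_of_le hab]
  have hμb : ∀ᵐ x ∂μ, x ∈ Set.uIcc b a := by rwa [Set.uIcc_of_ge hab]
  have hLp := memLp_two_id_of_ae_mem isCompact_Icc hμ
  have hfμ := integrable_of_continuousOn_of_ae_mem isCompact_Icc hμ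
    fun x hx ↦ (hf x hx).continuousWithinAt
  constructor
  · exact twoPointIntegral_le_integral hLp (integral_sub_ne_zero hμa ha) ha.ne' hf hf' hfμ
      (Set.left_mem_Icc.2 hab) (Set.uIcc_of_le hab ▸ momentNode_mem_uIcc hμa ha)
      (hμ.mono fun x hx ↦ ⟨hx, hx.1⟩)
  · exact integral_le_twoPointIntegral hLp (integral_sub_ne_zero hμb hb) hb.ne' hf hf' hfμ
      (Set.right_mem_Icc.2 hab) (Set.uIcc_of_ge hab ▸ momentNode_mem_uIcc hμb hb)
      (hμ.mono fun x hx ↦ ⟨hx, hx.2⟩)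

theorem jensen_third_derivative_general {a b : ℝ} {f f' : ℝ → ℝ}
    (hμ : ∀ᵐ x ∂μ, x ∈ Set.Icc a b) (ha : 0 < ∫ x, (a - x) ^ 2 ∂μ)
    (hb : 0 < ∫ x, (b - x) ^ 2 ∂μ)
    (hf : ∀ x ∈ Set.Icc a b, HasDerivWithinAt f (f' x) (Set.Icc a b) x) :
    (ConvexOn ℝ (Set.Icc a b) f' →
      twoPointIntegral μ a f ≤ ∫ x, f x ∂μ ∧ ∫ x, f x ∂μ ≤ twoPointIntegral μ b f) ∧
    (ConcaveOn ℝ (Set.Icc a b) f' →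
      twoPointIntegral μ b f ≤ ∫ x, f x ∂μ ∧ ∫ x, f x ∂μ ≤ twoPointIntegral μ a f) := by
  refine ⟨twoPointIntegral_le_integral_le_twoPointIntegral hμ ha hb hf, fun hf' ↦ ?_⟩
  simpa [twoPointIntegral_neg, integral_neg, and_comm] using
    twoPointIntegral_le_integral_le_twoPointIntegral hμ ha hb (fun x hx ↦ (hf x hx).fun_neg) hf'.neg

end CompactInterval

section IteratedDeriv

variable {f : ℝ → ℝ} {s : Set ℝ}

lemma hasDerivWithinAt_iteratedDerivWithin {𝕜 F : Type*} [NontriviallyNormedField 𝕜]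
    [NormedAddCommGroup F] [NormedSpace 𝕜 F] {f : 𝕜 → F} {s : Set 𝕜} {n : WithTop ℕ∞} {k : ℕ}
    (hf : ContDiffOn 𝕜 n f s) (hk : k < n) (hs : UniqueDiffOn 𝕜 s) {x : 𝕜} (hx : x ∈ s) :
    HasDerivWithinAt (iteratedDerivWithin k f s) (iteratedDerivWithin (k + 1) f s x) s x := by
  rw [iteratedDerivWithin_succ]
  exact (hf.differentiableOn_iteratedDerivWithin hk hs x hx).hasDerivWithinAt

lemma convexOn_derivWithin_of_iteratedDerivWithin_three_nonneg (hs : Convex ℝ s)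
    (hs' : UniqueDiffOn ℝ s) (hf : ContDiffOn ℝ 3 f s)
    (h : ∀ x ∈ s, 0 ≤ iteratedDerivWithin 3 f s x) : ConvexOn ℝ s (derivWithin f s) := by
  have hderiv {k : ℕ} (hk : (k : WithTop ℕ∞) < 3) {x : ℝ} (hx : x ∈ s) :=
    hasDerivWithinAt_iteratedDerivWithin hf hk hs' hx
  rw [← iteratedDerivWithin_one]
  exact convexOn_of_hasDerivWithinAt2_nonneg hs
    (fun x hx ↦ (hderiv (by norm_num) hx).continuousWithinAt)
    (fun x hx ↦ (hderiv (by norm_num) (interior_subset hx)).mono interior_subset)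
    (fun x hx ↦ (hderiv (by norm_num) (interior_subset hx)).mono interior_subset)
    fun x hx ↦ h x (interior_subset hx)

lemma concaveOn_derivWithin_of_iteratedDerivWithin_three_nonpos (hs : Convex ℝ s)
    (hs' : UniqueDiffOn ℝ s) (hf : ContDiffOn ℝ 3 f s)
    (h : ∀ x ∈ s, iteratedDerivWithin 3 f s x ≤ 0) : ConcaveOn ℝ s (derivWithin f s) := by
  have hneg := convexOn_derivWithin_of_iteratedDerivWithin_three_nonneg hs hs' hf.neg fun x hx ↦ by
    rw [iteratedDerivWithin_fun_neg]
    exact neg_nonneg.2 (h x hx)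
  have hderiv : derivWithin (fun x ↦ -f x) s = -derivWithin f s :=
    funext fun _ ↦ derivWithin.fun_neg
  rwa [hderiv, neg_convexOn_iff] at hneg

end IteratedDeriv

/-- An analogue of Jensen's inequality with a sign condition on the third derivative.
Let `μ` be a finite positive Borel measure on `[0,1]` (here: a finite measure on `ℝ`
vanishing outside `[0,1]`) with `∫ x² dμ > 0` and `∫ (1-x)² dμ > 0`, and set
`m = μ([0,1])`, `x₀ = ∫x²dμ / ∫xdμ`, `α₀ = (∫xdμ)² / ∫x²dμ`,
`x₁ = 1 - ∫(1-x)²dμ / ∫(1-x)dμ`, `α₁ = (∫(1-x)dμ)² / ∫(1-x)²dμ`.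
If `f` is three times continuously differentiable on `[0,1]` with `f''' ≥ 0` there, then
`(m - α₀)f(0) + α₀f(x₀) ≤ ∫₀¹ f dμ ≤ (m - α₁)f(1) + α₁f(x₁)`;
if instead `f''' ≤ 0` on `[0,1]`, both inequalities are reversed. -/
theorem jensen_third_derivative (μ : Measure ℝ) [IsFiniteMeasure μ]
    (hsupp : μ (Set.Icc (0:ℝ) 1)ᶜ = 0)
    (hx2 : 0 < ∫ x in Set.Icc (0:ℝ) 1, x ^ 2 ∂μ)
    (h1x2 : 0 < ∫ x in Set.Icc (0:ℝ) 1, (1 - x) ^ 2 ∂μ)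
    (m x₀ α₀ x₁ α₁ : ℝ)
    (hm : m = (μ (Set.Icc (0:ℝ) 1)).toReal)
    (hx₀ : x₀ = (∫ x in Set.Icc (0:ℝ) 1, x ^ 2 ∂μ) / (∫ x in Set.Icc (0:ℝ) 1, x ∂μ))
    (hα₀ : α₀ = (∫ x in Set.Icc (0:ℝ) 1, x ∂μ) ^ 2 / (∫ x in Set.Icc (0:ℝ) 1, x ^ 2 ∂μ))
    (hx₁ : x₁ = 1 - (∫ x in Set.Icc (0:ℝ) 1, (1 - x) ^ 2 ∂μ)
        / (∫ x in Set.Icc (0:ℝ) 1, (1 - x) ∂μ))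
    (hα₁ : α₁ = (∫ x in Set.Icc (0:ℝ) 1, (1 - x) ∂μ) ^ 2
        / (∫ x in Set.Icc (0:ℝ) 1, (1 - x) ^ 2 ∂μ))
    (f : ℝ → ℝ) (hf : ContDiffOn ℝ 3 f (Set.Icc (0:ℝ) 1)) :
    ((∀ x ∈ Set.Icc (0:ℝ) 1, 0 ≤ iteratedDerivWithin 3 f (Set.Icc (0:ℝ) 1) x) →
      (m - α₀) * f 0 + α₀ * f x₀ ≤ ∫ x in Set.Icc (0:ℝ) 1, f x ∂μ ∧
        ∫ x in Set.Icc (0:ℝ) 1, f x ∂μ ≤ (m - α₁) * f 1 + α₁ * f x₁) ∧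
    ((∀ x ∈ Set.Icc (0:ℝ) 1, iteratedDerivWithin 3 f (Set.Icc (0:ℝ) 1) x ≤ 0) →
      (m - α₁) * f 1 + α₁ * f x₁ ≤ ∫ x in Set.Icc (0:ℝ) 1, f x ∂μ ∧
        ∫ x in Set.Icc (0:ℝ) 1, f x ∂μ ≤ (m - α₀) * f 0 + α₀ * f x₀) := by
  have hU : UniqueDiffOn ℝ (Set.Icc (0 : ℝ) 1) := uniqueDiffOn_Icc_zero_one
  have h := jensen_third_derivative_general (ae_restrict_mem measurableSet_Icc)
    (by simpa using hx2) h1x2 fun x hx ↦ (hf.differentiableOn (by norm_num) x hx).hasDerivWithinAt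
  rw [twoPointIntegral_zero, twoPointIntegral, momentWeight, momentNode,
    measureReal_restrict_apply_univ] at h
  subst hm hx₀ hα₀ hx₁ hα₁
  exact h.imp
    (· ∘ convexOn_derivWithin_of_iteratedDerivWithin_three_nonneg (convex_Icc 0 1) hU hf)
    (· ∘ concaveOn_derivWithin_of_iteratedDerivWithin_three_nonpos (convex_Icc 0 1) hU hf)
end

section
/- Define g(x,y) = (1/(1−x))·(1 + y − xy)·ln(1 + y − xy) + (1/x)·(1 − xy)·ln(1 − xy), with the convention that (1 − xy)·ln(1 − xy) = 0 when xy = 1. Then g(x,y) is an increasing function of x on the region U = { (x,y) : 0 < x < 1, 0 ≤ y ≤ 1/x }; that is, for all real x₁, x₂, y with 0 < x₁ ≤ x₂ < 1 and 0 ≤ y ≤ 1/x₂, one has g(x₁, y) ≤ g(x₂, y). -/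
/-! Up to a linear term, `(1 + c * y) * log (1 + c * y) / c` is the integral of `log (1 + c * t)`
over `0 ≤ t ≤ y`. Taking `c = 1 - x` and `c = -x`, the two linear terms cancel in `g`, and
`g (x, y) = ∫ t in 0..y, (log (1 + (1 - x) * t) - log (1 - x * t))`.
Since `log` is concave, its increment over an interval of fixed length `t` is nonincreasing in the
left endpoint, here `1 - x * t`, so for each `t` the integrand is nondecreasing in `x`. -/

open MeasureTheory Set

/-- The function `g (x, y)` of the Chernoff-type bound `log P(X ≤ λ - a) ≤ -σ² * g (x, y)`, where
`σ² = x * λ` and `a = y * σ²`. Its values at `x = 0` and `x = 1` are junk; where `x * y = 1`, the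
second summand is `0` because `Real.log 0 = 0`. -/
noncomputable def chernoffRate (x y : ℝ) : ℝ :=
  (1 / (1 - x)) * (1 + y - x * y) * Real.log (1 + y - x * y)
    + (1 / x) * (1 - x * y) * Real.log (1 - x * y)

theorem intervalIntegrable_log_add_mul (d c a b : ℝ) :
    IntervalIntegrable (fun t ↦ Real.log (d + c * t)) volume a b :=
  MeromorphicOn.intervalIntegrable_log (f := fun t ↦ d + c * t) fun _ _ ↦ by fun_prop

theorem integral_log_add_mul {c : ℝ} (hc : c ≠ 0) (d a b : ℝ) :
    ∫ t in a..b, Real.log (d + c * t) =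
      ((d + c * b) * Real.log (d + c * b) - (d + c * a) * Real.log (d + c * a)) / c - (b - a) := by
  rw [intervalIntegral.integral_comp_add_mul Real.log hc, integral_log, smul_eq_mul]
  field_simp
  ring

theorem chernoffRate_eq_integral {x : ℝ} (hx₀ : x ≠ 0) (hx₁ : x ≠ 1) (y : ℝ) :
    chernoffRate x y = ∫ t in 0..y, (Real.log (1 + (1 - x) * t) - Real.log (1 + -x * t)) := by
  have hx₁' : 1 - x ≠ 0 := sub_ne_zero.mpr hx₁.symm
  rw [intervalIntegral.integral_sub (intervalIntegrable_log_add_mul 1 (1 - x) 0 y)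
      (intervalIntegrable_log_add_mul 1 (-x) 0 y),
    integral_log_add_mul hx₁', integral_log_add_mul (neg_ne_zero.mpr hx₀), chernoffRate,
    show 1 + y - x * y = 1 + (1 - x) * y by ring, show 1 - x * y = 1 + -x * y by ring]
  simp only [mul_zero, add_zero, Real.log_one]
  field_simp
  ring

theorem antitoneOn_log_add_sub_log {t : ℝ} (ht : 0 ≤ t) :
    AntitoneOn (fun u ↦ Real.log (u + t) - Real.log u) (Ioi 0) := by
  intro u (hu : 0 < u) v (hv : 0 < v) huv
  have hprod : (v + t) * u ≤ (u + t) * v := by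
    linarith [mul_le_mul_of_nonneg_left huv ht]
  have hlog := Real.log_le_log (by positivity) hprod
  rw [Real.log_mul (by positivity) hu.ne', Real.log_mul (by positivity) hv.ne'] at hlog
  linarith

theorem monotoneOn_log_sub_log {t : ℝ} (ht : 0 ≤ t) :
    MonotoneOn (fun x ↦ Real.log (1 + (1 - x) * t) - Real.log (1 + -x * t)) {x | x * t < 1} := by
  intro x₁ (hx₁ : x₁ * t < 1) x₂ (hx₂ : x₂ * t < 1) hx
  have hpos₁ : 0 < 1 + -x₁ * t := by linarith
  have hpos₂ : 0 < 1 + -x₂ * t := by linarith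
  have hle : 1 + -x₂ * t ≤ 1 + -x₁ * t := by gcongr
  have hshift (x : ℝ) : 1 + (1 - x) * t = 1 + -x * t + t := by ring
  simpa only [hshift] using antitoneOn_log_add_sub_log ht hpos₂ hpos₁ hle

theorem g_increasing_in_x_general {y : ℝ} (hy : 0 ≤ y) :
    MonotoneOn (fun x ↦ chernoffRate x y) {x | x ≠ 0 ∧ x ≠ 1 ∧ x * y ≤ 1} := by
  have hint (x : ℝ) := (intervalIntegrable_log_add_mul 1 (1 - x) 0 y).sub
    (intervalIntegrable_log_add_mul 1 (-x) 0 y)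
  rintro x₁ ⟨hx₁₀, hx₁₁, -⟩ x₂ ⟨hx₂₀, hx₂₁, hx₂y⟩ hx
  simp only [chernoffRate_eq_integral hx₁₀ hx₁₁, chernoffRate_eq_integral hx₂₀ hx₂₁]
  refine intervalIntegral.integral_mono_on_of_le_Ioo hy (hint x₁) (hint x₂)
    fun t ⟨ht₀, hty⟩ ↦ ?_
  have hx₂t : x₂ * t < 1 := by
    rcases le_or_gt x₂ 0 with hneg | hpos
    · exact (mul_nonpos_of_nonpos_of_nonneg hneg ht₀.le).trans_lt one_pos
    · exact (mul_lt_mul_of_pos_left hty hpos).trans_le hx₂y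
  have hx₁t : x₁ * t < 1 := (mul_le_mul_of_nonneg_right hx ht₀.le).trans_lt hx₂t
  exact monotoneOn_log_sub_log ht₀.le hx₁t hx₂t hx

/-- The function
`g(x,y) = (1/(1-x))(1 + y - xy)·log(1 + y - xy) + (1/x)(1 - xy)·log(1 - xy)`
(with the convention `(1 - xy)·log(1 - xy) = 0` when `xy = 1`, which is automatic
since `Real.log 0 = 0`) is increasing in `x` on
`U = {(x,y) : 0 < x < 1, 0 ≤ y ≤ 1/x}`: if `0 < x₁ ≤ x₂ < 1` and `0 ≤ y ≤ 1/x₂`,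
then `g(x₁,y) ≤ g(x₂,y)`. -/
theorem g_increasing_in_x (x₁ x₂ y : ℝ) (hx₁ : 0 < x₁) (hx₁₂ : x₁ ≤ x₂) (hx₂ : x₂ < 1)
    (hy0 : 0 ≤ y) (hy : y ≤ 1 / x₂) :
    (1 / (1 - x₁)) * (1 + y - x₁ * y) * Real.log (1 + y - x₁ * y)
        + (1 / x₁) * (1 - x₁ * y) * Real.log (1 - x₁ * y)
      ≤ (1 / (1 - x₂)) * (1 + y - x₂ * y) * Real.log (1 + y - x₂ * y)
        + (1 / x₂) * (1 - x₂ * y) * Real.log (1 - x₂ * y) := by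
  have hx₂₀ : 0 < x₂ := hx₁.trans_le hx₁₂
  have hx₂y : x₂ * y ≤ 1 := (le_div_iff₀' hx₂₀).mp hy
  have hx₁y : x₁ * y ≤ 1 := (mul_le_mul_of_nonneg_right hx₁₂ hy0).trans hx₂y
  exact g_increasing_in_x_general hy0 ⟨hx₁.ne', (hx₁₂.trans_lt hx₂).ne, hx₁y⟩
    ⟨hx₂₀.ne', hx₂.ne, hx₂y⟩ hx₁₂
end
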